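/- arXiv:1405.6606 — 2 statements merged into one kernel-verified Lean document; each statement's English description precedes it below -/
import Mathlib

section
/- Let a₁,…,aₙ and b₁,…,bₙ be points in ℝ² with |aᵢ − aⱼ| ≥ |bᵢ − bⱼ| for all i, j. Then the perimeter of the convex hull of {a₁,…,aₙ} is at least the perimeter of the convex hull of {b₁,…,bₙ}. -/
open MeasureTheory Classical

/-- Perimeter of a convex body in the plane: the 1-dimensional Hausdorff measure of the
boundary if the interior is nonempty; twice the 1-dimensional Hausdorff measure of the
(degenerate) set otherwise. -/
noncomputable def planePerimeter (A : Set (EuclideanSpace ℝ (Fin 2))) : ENNReal :=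
  if (interior A).Nonempty then μH[1] (frontier A) else 2 * μH[1] A

/-!
A line that meets the interior of a planar convex body `K` but none of its vertices crosses the
boundary in exactly two points, each on exactly one edge. Averaging over Gaussian directions `g`
gives Cauchy's formula: `√(2 / π)` times the perimeter of `K` is twice the mean length of the
projection `⟪g, K⟫`. For the convex hull of the points `aᵢ` this length is
`maxᵢ ⟪aᵢ, g⟫ + maxᵢ ⟪aᵢ, -g⟫`, so the perimeter is a multiple of `𝔼 maxᵢ ⟪aᵢ, g⟫`, which by the
Sudakov–Fernique inequality is monotone in the distances between the points.

For the Sudakov–Fernique inequality, place the two families in orthogonal subspaces, as `A` and `B`,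
and interpolate by `cos θ • A + sin θ • B`. With the maximum replaced by `log ∑ᵢ exp`, whose
gradient consists of the softmax weights `wᵢ`, Gaussian integration by parts turns the
`θ`-derivative of the expectation into
`½ sin θ cos θ 𝔼 ∑ᵢⱼ wᵢ wⱼ (‖Bᵢ - Bⱼ‖² - ‖Aᵢ - Aⱼ‖²) ≤ 0`. Replacing the families by large
multiples of themselves removes the error made in smoothing the maximum.
-/

open Set Filter Topology Module ProbabilityTheory
open scoped InnerProductSpace ENNReal NNReal

section Segments

variable {V : Type*} [NormedAddCommGroup V] [NormedSpace ℝ V]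

theorem exists_eq_segment_of_injOn {K : Set V} (hK : IsCompact K) (hconv : Convex ℝ K)
    (hne : K.Nonempty) (ℓ : StrongDual ℝ V) (hℓ : InjOn ℓ K) : ∃ p q, K = segment ℝ p q := by
  obtain ⟨p, hp, hpmin⟩ := hK.exists_isMinOn hne ℓ.continuous.continuousOn
  obtain ⟨q, hq, hqmax⟩ := hK.exists_isMaxOn hne ℓ.continuous.continuousOn
  refine ⟨p, q, Subset.antisymm (fun x hx ↦ ?_) (hconv.segment_subset hp hq)⟩
  have hpq : ℓ '' segment ℝ p q = Icc (ℓ p) (ℓ q) := by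
    rw [← segment_eq_Icc (hpmin hq)]
    exact image_segment ℝ ℓ.toLinearMap.toAffineMap p q
  obtain ⟨y, hy, hyx⟩ : ℓ x ∈ ℓ '' segment ℝ p q := hpq ▸ ⟨hpmin hx, hqmax hx⟩
  exact hℓ (hconv.segment_subset hp hq hy) hx hyx ▸ hy

end Segments

section Faces

variable {E : Type*} [NormedAddCommGroup E] [InnerProductSpace ℝ E] {K : Set E} {v w x y : E}

/-- The face of `K` with outer normal `v`: the points of `K` at which `⟪v, ·⟫` is maximal. -/
def face (K : Set E) (v : E) : Set E := {x ∈ K | ∀ y ∈ K, ⟪v, y⟫_ℝ ≤ ⟪v, x⟫_ℝ}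

/-- The outer unit normals of the faces of `K` that are not single points; for a convex polygon
these are the normals of its edges. -/
def edgeNormals (K : Set E) : Set E := {v | ‖v‖ = 1 ∧ (face K v).Nontrivial}

theorem face_subset : face K v ⊆ K := sep_subset _ _

theorem inner_eq_of_mem_face (hx : x ∈ face K v) (hy : y ∈ face K v) : ⟪v, x⟫_ℝ = ⟪v, y⟫_ℝ :=
  (hy.2 x hx.1).antisymm (hx.2 y hy.1)

theorem isExposed_face : IsExposed ℝ K (face K v) :=
  ContinuousLinearMap.toExposed.isExposed (l := innerSL ℝ v)

theorem isCompact_face (hK : IsCompact K) : IsCompact (face K v) := isExposed_face.isCompact hK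

theorem convex_face (hK : Convex ℝ K) : Convex ℝ (face K v) := isExposed_face.convex hK

theorem isExtreme_face : IsExtreme ℝ K (face K v) := isExposed_face.isExtreme

theorem face_nonempty (hK : IsCompact K) (hne : K.Nonempty) : (face K v).Nonempty :=
  hK.exists_isMaxOn hne (innerSL ℝ v).continuous.continuousOn

theorem disjoint_face_interior (hv : v ≠ 0) : Disjoint (face K v) (interior K) := by
  refine disjoint_left.2 fun x hx hxi ↦ hv ?_
  have hmax : IsLocalMax (innerSL ℝ v) x :=
    mem_of_superset (mem_interior_iff_mem_nhds.1 hxi) hx.2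
  have hzero := hmax.hasFDerivAt_eq_zero (innerSL ℝ v).hasFDerivAt
  simpa using congr($hzero v)

theorem notMem_interior_of_mem_face_edgeNormals (hv : v ∈ edgeNormals K) (hx : x ∈ face K v) :
    x ∉ interior K :=
  disjoint_left.1 (disjoint_face_interior (ne_zero_of_norm_ne_zero (hv.1 ▸ one_ne_zero))) hx

theorem exists_mem_face_of_notMem_interior [CompleteSpace E] (hK : Convex ℝ K)
    (hint : (interior K).Nonempty) (hx : x ∈ K) (hxi : x ∉ interior K) :
    ∃ v, ‖v‖ = 1 ∧ x ∈ face K v := by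
  obtain ⟨f, hf⟩ := geometric_hahn_banach_open_point hK.interior isOpen_interior hxi
  set u := (InnerProductSpace.toDual ℝ E).symm f
  have hfu : ∀ y, ⟪u, y⟫_ℝ = f y := fun y ↦ InnerProductSpace.toDual_symm_apply
  have hu0 : u ≠ 0 := by
    rintro h0
    obtain ⟨c, hc⟩ := hint
    have := hf c hc
    simp [← hfu, h0] at this
  have hle : ∀ y ∈ K, ⟪u, y⟫_ℝ ≤ ⟪u, x⟫_ℝ := by
    have hclosed : IsClosed {y | ⟪u, y⟫_ℝ ≤ ⟪u, x⟫_ℝ} :=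
      isClosed_le (by fun_prop) continuous_const
    refine fun y hy ↦ closure_minimal (fun z hz ↦ ?_) hclosed
      (hK.closure_interior_eq_closure_of_nonempty_interior hint ▸ subset_closure hy)
    simp only [mem_ofPred_eq, hfu, (hf z hz).le]
  refine ⟨‖u‖⁻¹ • u, norm_smul_inv_norm hu0, hx, fun y hy ↦ ?_⟩
  simp only [real_inner_smul_left]
  exact mul_le_mul_of_nonneg_left (hle y hy) (by positivity)

theorem exists_ne_mem_face_of_notMem_extremePoints (hx : x ∈ K) (hxe : x ∉ extremePoints ℝ K) :
    ∃ p q, p ≠ q ∧ ∀ v, x ∈ face K v → p ∈ face K v ∧ q ∈ face K v := by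
  simp only [mem_extremePoints, not_and, not_forall] at hxe
  obtain ⟨p, hp, q, hq, hxpq, hne⟩ := hxe hx
  refine ⟨p, q, fun hpq ↦ ?_, fun v hv ↦ ?_⟩
  · subst hpq
    simp only [openSegment_same, mem_singleton_iff] at hxpq
    exact hne hxpq.symm hxpq.symm
  · exact ⟨isExtreme_face.left_mem_of_mem_openSegment hp hq hv hxpq,
      isExtreme_face.right_mem_of_mem_openSegment hp hq hv hxpq⟩

theorem exists_inner_lt_of_forall_extremePoints_inner_ne (hK : IsCompact K) (hx : x ∈ K) (g : E)
    (hgen : ∀ e ∈ extremePoints ℝ K, ⟪g, e⟫_ℝ ≠ ⟪g, x⟫_ℝ) : ∃ y ∈ K, ⟪g, x⟫_ℝ < ⟪g, y⟫_ℝ := by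
  obtain ⟨e, he⟩ := (isCompact_face (v := g) hK).extremePoints_nonempty (face_nonempty hK ⟨x, hx⟩)
  have heK := isExtreme_face.extremePoints_subset_extremePoints he
  exact ⟨e, heK.1, ((extremePoints_subset he).2 x hx).lt_of_ne (hgen e heK).symm⟩

theorem convex_inner_eq (g : E) (t : ℝ) : Convex ℝ {x | ⟪g, x⟫_ℝ = t} :=
  convex_hyperplane (innerSL ℝ g).toLinearMap.isLinear t

theorem exists_mem_interior_inner_eq (hK : Convex ℝ K) (hint : (interior K).Nonempty) {g : E}
    {t : ℝ} (hx : x ∈ K) (hy : y ∈ K) (hxt : ⟪g, x⟫_ℝ < t) (hty : t < ⟪g, y⟫_ℝ) :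
    ∃ c ∈ interior K, ⟪g, c⟫_ℝ = t := by
  have hcl : K ⊆ closure (interior K) :=
    (hK.closure_interior_eq_closure_of_nonempty_interior hint).symm ▸ subset_closure
  have hcont : Continuous fun z ↦ ⟪g, z⟫_ℝ := by fun_prop
  obtain ⟨x', hx't, hx'⟩ := mem_closure_iff.1 (hcl hx) _ (isOpen_lt hcont continuous_const) hxt
  obtain ⟨y', hy't, hy'⟩ := mem_closure_iff.1 (hcl hy) _ (isOpen_lt continuous_const hcont) hty
  exact hK.interior.isPreconnected.intermediate_value hx' hy' hcont.continuousOn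
    ⟨le_of_lt hx't, le_of_lt hy't⟩

theorem exists_mem_interior_inner_eq_of_forall_extremePoints_inner_ne (hK : IsCompact K)
    (hconv : Convex ℝ K) (hint : (interior K).Nonempty) (hx : x ∈ K) {g : E}
    (hgen : ∀ e ∈ extremePoints ℝ K, ⟪g, e⟫_ℝ ≠ ⟪g, x⟫_ℝ) :
    ∃ c ∈ interior K, ⟪g, c⟫_ℝ = ⟪g, x⟫_ℝ := by
  obtain ⟨z, hz, hxz⟩ := exists_inner_lt_of_forall_extremePoints_inner_ne hK hx g hgen
  obtain ⟨y, hy, hyx⟩ := exists_inner_lt_of_forall_extremePoints_inner_ne hK hx (-g)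
    fun e he ↦ by simpa only [inner_neg_left, ne_eq, neg_inj] using hgen e he
  simp only [inner_neg_left, neg_lt_neg_iff] at hyx
  exact exists_mem_interior_inner_eq hconv hint hy hz hyx hxz

end Faces

theorem extremePoints_nontrivial {V : Type*} [NormedAddCommGroup V] [NormedSpace ℝ V] {K : Set V}
    (hK : IsCompact K) (hconv : Convex ℝ K) (hnt : K.Nontrivial) :
    (extremePoints ℝ K).Nontrivial := by
  by_contra hsub
  rw [not_nontrivial_iff] at hsub
  refine hnt.not_subsingleton ?_
  rw [← closure_convexHull_extremePoints hK hconv]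
  rcases hsub.eq_empty_or_singleton with h | ⟨x, h⟩ <;> simp [h]

theorem tsum_indicator_one_eq_encard {α ι : Type*} (s : ι → Set α) (x : α) :
    ∑' i, (s i).indicator (1 : α → ℝ≥0∞) x = {i | x ∈ s i}.encard := by
  rw [← ENNReal.tsum_set_one, tsum_subtype {i | x ∈ s i} fun _ ↦ (1 : ℝ≥0∞)]
  rfl

section Plane

variable {E : Type*} [NormedAddCommGroup E] [InnerProductSpace ℝ E] [Fact (finrank ℝ E = 2)]
  {K : Set E} {v w x : E}

theorem exists_ne_zero_inner_eq_zero (v : E) : ∃ w ≠ 0, ⟪v, w⟫_ℝ = 0 := by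
  have : FiniteDimensional ℝ E := .of_fact_finrank_eq_succ 1
  have hperp : (ℝ ∙ v)ᗮ ≠ ⊥ := fun hbot ↦ by
    have hle := finrank_le_one v fun w ↦ Submodule.mem_span_singleton.1 <|
      Submodule.orthogonal_eq_bot_iff.1 hbot ▸ Submodule.mem_top
    rw [Fact.out (p := finrank ℝ E = 2)] at hle
    omega
  obtain ⟨w, hw, hw0⟩ := Submodule.exists_mem_ne_zero_of_ne_bot hperp
  exact ⟨w, hw0, Submodule.mem_orthogonal_singleton_iff_inner_right.1 hw⟩

theorem eq_of_inner_eq_of_inner_eq (hv : v ≠ 0) (hw : w ≠ 0) (hvw : ⟪v, w⟫_ℝ = 0) {x y : E}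
    (hvxy : ⟪v, x⟫_ℝ = ⟪v, y⟫_ℝ) (hwxy : ⟪w, x⟫_ℝ = ⟪w, y⟫_ℝ) : x = y := by
  have hvu : ⟪v, x - y⟫_ℝ = 0 := by rw [inner_sub_right, hvxy, sub_self]
  have hwu : ⟪w, x - y⟫_ℝ = 0 := by rw [inner_sub_right, hwxy, sub_self]
  obtain ⟨c, hc⟩ := Submodule.mem_span_singleton.1
    (Submodule.mem_span_singleton_of_inner_eq_zero_of_inner_eq_zero hv hw hvu hvw)
  rw [← sub_eq_zero, ← inner_self_eq_zero (𝕜 := ℝ)]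
  nth_rw 1 [← hc]
  rw [real_inner_smul_left, hwu, mul_zero]

theorem exists_eq_segment_of_inner_eq (hK : IsCompact K) (hconv : Convex ℝ K) (hne : K.Nonempty)
    (hv : v ≠ 0) (hconst : ∀ x ∈ K, ∀ y ∈ K, ⟪v, x⟫_ℝ = ⟪v, y⟫_ℝ) :
    ∃ p q, K = segment ℝ p q := by
  obtain ⟨w, hw, hvw⟩ := exists_ne_zero_inner_eq_zero v
  exact exists_eq_segment_of_injOn hK hconv hne (innerSL ℝ w) fun x hx y hy hxy ↦
    eq_of_inner_eq_of_inner_eq hv hw hvw (hconst x hx y hy) hxy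

theorem eq_or_eq_neg_of_inner_eq_zero {u : E} (hu : u ≠ 0) (hv : ‖v‖ = 1) (hw : ‖w‖ = 1)
    (huv : ⟪u, v⟫_ℝ = 0) (huw : ⟪u, w⟫_ℝ = 0) : v = w ∨ v = -w := by
  have hw0 : w ≠ 0 := norm_ne_zero_iff.1 (hw ▸ one_ne_zero)
  obtain ⟨c, rfl⟩ := Submodule.mem_span_singleton.1
    (Submodule.mem_span_singleton_of_inner_eq_zero_of_inner_eq_zero hu hw0 huv huw)
  rw [norm_smul, hw, mul_one, Real.norm_eq_abs, abs_eq zero_le_one] at hv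
  rcases hv with rfl | rfl <;> simp

theorem eq_of_ne_mem_face (hint : (interior K).Nonempty) (hv : ‖v‖ = 1) (hw : ‖w‖ = 1)
    {p q : E} (hpq : p ≠ q) (hpv : p ∈ face K v) (hqv : q ∈ face K v) (hpw : p ∈ face K w)
    (hqw : q ∈ face K w) : v = w := by
  refine (eq_or_eq_neg_of_inner_eq_zero (sub_ne_zero.2 hpq) hv hw ?_ ?_).resolve_right ?_
  · rw [real_inner_comm, inner_sub_right, inner_eq_of_mem_face hpv hqv, sub_self]
  · rw [real_inner_comm, inner_sub_right, inner_eq_of_mem_face hpw hqw, sub_self]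
  · rintro rfl
    obtain ⟨c, hc⟩ := hint
    have hw0 : w ≠ 0 := norm_ne_zero_iff.1 (hw ▸ one_ne_zero)
    have hcw : ⟪w, c⟫_ℝ = ⟪w, p⟫_ℝ := by
      have h₁ := hpw.2 c (interior_subset hc)
      have h₂ := hpv.2 c (interior_subset hc)
      simp only [inner_neg_left] at h₂
      linarith
    exact disjoint_left.1 (disjoint_face_interior hw0)
      ⟨interior_subset hc, fun y hy ↦ hcw ▸ hpw.2 y hy⟩ hc

theorem finite_norm_eq_one_inner_eq_zero {u : E} (hu : u ≠ 0) :
    {v | ‖v‖ = 1 ∧ ⟪u, v⟫_ℝ = 0}.Finite := by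
  rcases eq_empty_or_nonempty {v | ‖v‖ = 1 ∧ ⟪u, v⟫_ℝ = 0} with hempty | ⟨w, hw, huw⟩
  · exact hempty ▸ finite_empty
  · exact (toFinite {w, -w}).subset fun v ⟨hv, huv⟩ ↦
      eq_or_eq_neg_of_inner_eq_zero hu hv hw huv huw

theorem countable_edgeNormals (hK : IsCompact K) (hconv : Convex ℝ K)
    (hcount : (extremePoints ℝ K).Countable) : (edgeNormals K).Countable := by
  have hcover : edgeNormals K ⊆ ⋃ d ∈ (extremePoints ℝ K ×ˢ extremePoints ℝ K) ∩ {d | d.1 ≠ d.2},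
      {v | ‖v‖ = 1 ∧ ⟪d.1 - d.2, v⟫_ℝ = 0} := fun v ⟨hv, hnt⟩ ↦ by
    obtain ⟨p, hp, q, hq, hpq⟩ :=
      extremePoints_nontrivial (isCompact_face hK) (convex_face hconv) hnt
    have hext := (isExtreme_face (K := K) (v := v)).extremePoints_subset_extremePoints
    refine mem_iUnion₂.2 ⟨(p, q), ⟨⟨hext hp, hext hq⟩, hpq⟩, hv, ?_⟩
    rw [real_inner_comm, inner_sub_right,
      inner_eq_of_mem_face (extremePoints_subset hp) (extremePoints_subset hq), sub_self]
  exact (((hcount.prod hcount).mono inter_subset_left).biUnion fun d hd ↦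
    (finite_norm_eq_one_inner_eq_zero (sub_ne_zero.2 hd.2)).countable).mono hcover

theorem existsUnique_edgeNormal (hconv : Convex ℝ K)
    (hint : (interior K).Nonempty) (hx : x ∈ K) (hxi : x ∉ interior K)
    (hxe : x ∉ extremePoints ℝ K) : ∃! v, v ∈ edgeNormals K ∧ x ∈ face K v := by
  have : FiniteDimensional ℝ E := .of_fact_finrank_eq_succ 1
  have := FiniteDimensional.complete ℝ E
  obtain ⟨v, hv, hxv⟩ := exists_mem_face_of_notMem_interior hconv hint hx hxi
  obtain ⟨p, q, hpq, hface⟩ := exists_ne_mem_face_of_notMem_extremePoints hx hxe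
  refine ⟨v, ⟨⟨hv, p, (hface v hxv).1, q, (hface v hxv).2, hpq⟩, hxv⟩, ?_⟩
  rintro w ⟨⟨hw, -⟩, hxw⟩
  exact eq_of_ne_mem_face hint hw hv hpq (hface w hxw).1 (hface w hxw).2 (hface v hxv).1
    (hface v hxv).2

theorem left_notMem_interior_of_inter_inner_eq_eq_segment {g p q : E} {t : ℝ}
    (hpq : K ∩ {x | ⟪g, x⟫_ℝ = t} = segment ℝ p q) : p ∉ interior K := fun hp ↦ by
  obtain ⟨w, hw, hgw⟩ := exists_ne_zero_inner_eq_zero g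
  have hgp : ⟪g, p⟫_ℝ = t := (hpq.symm.subset (left_mem_segment ℝ p q)).2
  have hnear : ∀ᶠ ε in 𝓝 (0 : ℝ), p + ε • w ∈ segment ℝ p q := by
    have hcont : Tendsto (fun ε : ℝ ↦ p + ε • w) (𝓝 0) (𝓝 p) :=
      Continuous.tendsto' (by fun_prop) _ _ (by simp)
    filter_upwards [hcont.eventually (mem_interior_iff_mem_nhds.1 hp)] with ε hε
    exact hpq.subset ⟨hε, by simp [inner_add_right, inner_smul_right, hgw, hgp]⟩
  have hnear_neg := (continuous_neg.tendsto' (0 : ℝ) 0 neg_zero).eventually hnear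
  obtain ⟨ε, hε0, hε, hε'⟩ := (hnear.and hnear_neg).exists_gt
  simp only [segment_eq_image', mem_image, add_right_inj] at hε hε'
  obtain ⟨θ, hθ, hθw⟩ := hε
  obtain ⟨θ', hθ', hθw'⟩ := hε'
  have hsum : (θ + θ') • (q - p) = 0 := by rw [add_smul, hθw, hθw', ← add_smul]; simp
  have hεw : ε • w = 0 := by
    rcases smul_eq_zero.1 hsum with h | h
    · rw [← hθw, show θ = 0 by linarith [hθ.1, hθ'.1], zero_smul]
    · rw [← hθw, h, smul_zero]
  exact (smul_ne_zero hε0.ne' hw) hεw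

theorem exists_inter_inner_eq_eq_segment (hK : IsCompact K) (hconv : Convex ℝ K) {c g : E}
    (hc : c ∈ interior K) (hg : g ≠ 0) : ∃ p q, p ≠ q ∧
      K ∩ {x | ⟪g, x⟫_ℝ = ⟪g, c⟫_ℝ} = segment ℝ p q ∧
      (K \ interior K) ∩ {x | ⟪g, x⟫_ℝ = ⟪g, c⟫_ℝ} = {p, q} := by
  have : FiniteDimensional ℝ E := .of_fact_finrank_eq_succ 1
  have := FiniteDimensional.complete ℝ E
  set L := {x | ⟪g, x⟫_ℝ = ⟪g, c⟫_ℝ}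
  have hcL : c ∈ K ∩ L := ⟨interior_subset hc, rfl⟩
  obtain ⟨p, q, hpq⟩ := exists_eq_segment_of_inner_eq
    (hK.inter_right (isClosed_eq (by fun_prop) continuous_const))
    (hconv.inter (convex_inner_eq g _)) ⟨c, hcL⟩ hg fun x hx y hy ↦ hx.2.trans hy.2.symm
  have hp := left_notMem_interior_of_inter_inner_eq_eq_segment hpq
  have hq := left_notMem_interior_of_inter_inner_eq_eq_segment (hpq.trans (segment_symm ℝ p q))
  have hpL := hpq.symm.subset (left_mem_segment ℝ p q)
  have hqL := hpq.symm.subset (right_mem_segment ℝ p q)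
  refine ⟨p, q, ?_, hpq, Subset.antisymm ?_ ?_⟩
  · rintro rfl
    rw [segment_same] at hpq
    exact hp (hpq.subset hcL ▸ hc)
  · rintro x ⟨⟨hxK, hxi⟩, hxL⟩
    by_contra hx
    obtain ⟨v, hv, hxv⟩ := exists_mem_face_of_notMem_interior hconv ⟨c, hc⟩ hxK hxi
    simp only [mem_insert_iff, mem_singleton_iff, not_or] at hx
    have hxpq : x ∈ openSegment ℝ p q := mem_openSegment_of_ne_left_right (Ne.symm hx.1)
      (Ne.symm hx.2) (hpq.subset ⟨hxK, hxL⟩)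
    have hcv : c ∈ face K v := (convex_face hconv).segment_subset
      (isExtreme_face.left_mem_of_mem_openSegment hpL.1 hqL.1 hxv hxpq)
      (isExtreme_face.right_mem_of_mem_openSegment hpL.1 hqL.1 hxv hxpq) (hpq.subset hcL)
    have hv0 : v ≠ 0 := norm_ne_zero_iff.1 (hv ▸ one_ne_zero)
    exact disjoint_left.1 (disjoint_face_interior hv0) hcv hc
  · rintro x (rfl | rfl)
    exacts [⟨⟨hpL.1, hp⟩, hpL.2⟩, ⟨⟨hqL.1, hq⟩, hqL.2⟩]

theorem encard_edgeNormals_inner_mem_image_face (hK : IsCompact K) (hconv : Convex ℝ K) {c g : E}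
    (hc : c ∈ interior K) (hgen : ∀ e ∈ extremePoints ℝ K, ⟪g, e⟫_ℝ ≠ ⟪g, c⟫_ℝ) :
    {v : edgeNormals K | ⟪g, c⟫_ℝ ∈ inner ℝ g '' face K v}.encard = 2 := by
  have hg : g ≠ 0 := by
    rintro rfl
    obtain ⟨e, he⟩ := hK.extremePoints_nonempty ⟨c, interior_subset hc⟩
    exact hgen e he (by simp)
  obtain ⟨p, q, hpq, hseg, hpair⟩ := exists_inter_inner_eq_eq_segment hK hconv hc hg
  have hnormal : ∀ x ∈ ({p, q} : Set E), ∃! v, v ∈ edgeNormals K ∧ x ∈ face K v := fun x hx ↦ by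
    obtain ⟨⟨hxK, hxi⟩, hxg⟩ := hpair.symm.subset hx
    exact existsUnique_edgeNormal hconv ⟨c, hc⟩ hxK hxi fun hxe ↦ hgen x hxe hxg
  obtain ⟨v, ⟨hv, hpv⟩, hv_unique⟩ := hnormal p (by simp)
  obtain ⟨w, ⟨hw, hqw⟩, hw_unique⟩ := hnormal q (by simp)
  have hvw : v ≠ w := by
    rintro rfl
    exact notMem_interior_of_mem_face_edgeNormals hv ((convex_face hconv).segment_subset hpv hqw
      (hseg.subset ⟨interior_subset hc, rfl⟩)) hc
  have hset : {u : edgeNormals K | ⟪g, c⟫_ℝ ∈ inner ℝ g '' face K u} = {⟨v, hv⟩, ⟨w, hw⟩} := by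
    ext ⟨u, hu⟩
    simp only [mem_ofPred_eq, mem_insert_iff, mem_singleton_iff, Subtype.mk.injEq]
    constructor
    · rintro ⟨x, hx, hxc⟩
      rcases hpair.subset ⟨⟨face_subset hx, notMem_interior_of_mem_face_edgeNormals hu hx⟩, hxc⟩
        with rfl | rfl
      exacts [.inl (hv_unique u ⟨hu, hx⟩), .inr (hw_unique u ⟨hu, hx⟩)]
    · rintro (rfl | rfl)
      exacts [⟨p, hpv, (hpair.symm.subset (by simp)).2⟩, ⟨q, hqw, (hpair.symm.subset (by simp)).2⟩]
  rw [hset, encard_pair (by simpa using hvw)]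

theorem tsum_volume_image_face (hK : IsCompact K) (hconv : Convex ℝ K)
    (hint : (interior K).Nonempty) (hcount : (extremePoints ℝ K).Countable) (g : E) :
    ∑' v : edgeNormals K, volume (inner ℝ g '' face K v) = 2 * volume (inner ℝ g '' K) := by
  have : Countable (edgeNormals K) := (countable_edgeNormals hK hconv hcount).to_subtype
  have hcont : Continuous (inner ℝ g) := by fun_prop
  have hmeas : ∀ v, MeasurableSet (inner ℝ g '' face K v) := fun v ↦
    ((isCompact_face hK).image hcont).measurableSet
  calc ∑' v : edgeNormals K, volume (inner ℝ g '' face K v)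
      = ∫⁻ t, ∑' v : edgeNormals K, (inner ℝ g '' face K v).indicator 1 t := by
        rw [lintegral_tsum fun v : edgeNormals K ↦
          (measurable_one.indicator (hmeas v)).aemeasurable]
        simp only [lintegral_indicator_one (hmeas _)]
    _ = ∫⁻ t, 2 * (inner ℝ g '' K).indicator 1 t := by
        refine lintegral_congr_ae ?_
        filter_upwards [(hcount.image (inner ℝ g)).ae_notMem volume] with t ht
        by_cases htK : t ∈ inner ℝ g '' K
        · obtain ⟨x, hx, rfl⟩ := htK
          have hgen : ∀ e ∈ extremePoints ℝ K, ⟪g, e⟫_ℝ ≠ ⟪g, x⟫_ℝ := fun e he h ↦ ht ⟨e, he, h⟩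
          obtain ⟨c, hc, hcx⟩ :=
            exists_mem_interior_inner_eq_of_forall_extremePoints_inner_ne hK hconv hint hx hgen
          rw [← hcx] at hgen ⊢
          have hcard := encard_edgeNormals_inner_mem_image_face hK hconv hc hgen
          rw [tsum_indicator_one_eq_encard, hcard, indicator_of_mem]
          · simp
          · exact ⟨c, interior_subset hc, rfl⟩
        · have hface : ∀ v, t ∉ inner ℝ g '' face K v := fun v hv ↦
            htK (image_mono face_subset hv)
          simp [indicator_of_notMem, hface, htK]
    _ = 2 * volume (inner ℝ g '' K) := by
        rw [lintegral_const_mul' _ _ ENNReal.ofNat_ne_top,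
          lintegral_indicator_one (hK.image hcont).measurableSet]

theorem hausdorffMeasure_frontier_eq_tsum [MeasurableSpace E] [BorelSpace E] (hK : IsCompact K)
    (hconv : Convex ℝ K) (hint : (interior K).Nonempty)
    (hcount : (extremePoints ℝ K).Countable) :
    μH[1] (frontier K) = ∑' v : edgeNormals K, μH[1] (face K v) := by
  have : Countable (edgeNormals K) := (countable_edgeNormals hK hconv hcount).to_subtype
  have := Measure.nullSingletonClass_hausdorff E one_pos
  have hfrontier : frontier K \ ⋃ v : edgeNormals K, face K v ⊆ extremePoints ℝ K := by
    rw [hK.isClosed.frontier_eq]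
    rintro x ⟨⟨hxK, hxi⟩, hx⟩
    by_contra hxe
    obtain ⟨v, ⟨hv, hxv⟩, -⟩ := existsUnique_edgeNormal hconv hint hxK hxi hxe
    exact hx (mem_iUnion.2 ⟨⟨v, hv⟩, hxv⟩)
  have hfaces : ⋃ v : edgeNormals K, face K v ⊆ frontier K := iUnion_subset fun v x hx ↦
    hK.isClosed.frontier_eq.symm ▸
      ⟨face_subset hx, notMem_interior_of_mem_face_edgeNormals v.2 hx⟩
  have hdisj : Pairwise fun v w : edgeNormals K ↦ AEDisjoint μH[1] (face K v) (face K w) := by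
    refine fun v w hvw ↦ Subsingleton.measure_zero (fun p hp q hq ↦ ?_) _
    by_contra hpq
    exact hvw (Subtype.ext (eq_of_ne_mem_face hint v.2.1 w.2.1 hpq hp.1 hq.1 hp.2 hq.2))
  rw [← measure_iUnion₀ hdisj fun v ↦ (isCompact_face hK).measurableSet.nullMeasurableSet]
  refine le_antisymm ?_ (measure_mono hfaces)
  rw [← union_sdiff_cancel hfaces]
  refine (measure_union_le _ _).trans_eq ?_
  rw [(hcount.mono hfrontier).measure_zero, add_zero]

theorem exists_eq_segment_of_interior_eq_empty (hK : IsCompact K) (hconv : Convex ℝ K)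
    (hne : K.Nonempty) (hint : interior K = ∅) : ∃ p q, K = segment ℝ p q := by
  have : FiniteDimensional ℝ E := .of_fact_finrank_eq_succ 1
  have hspan : vectorSpan ℝ K ≠ ⊤ := fun htop ↦ by
    have := hconv.interior_nonempty_iff_affineSpan_eq_top.2
      ((AffineSubspace.affineSpan_eq_top_iff_vectorSpan_eq_top_of_nonempty ℝ E E hne).2 htop)
    exact this.ne_empty hint
  obtain ⟨v, hv, hv0⟩ := Submodule.exists_mem_ne_zero_of_ne_bot
    (mt Submodule.orthogonal_eq_bot_iff.1 hspan)
  refine exists_eq_segment_of_inner_eq hK hconv hne hv0 fun x hx y hy ↦ ?_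
  rw [← sub_eq_zero, ← inner_sub_right]
  exact Submodule.inner_left_of_mem_orthogonal (vsub_mem_vectorSpan ℝ hx hy) hv

end Plane

section StdGaussian

variable {E : Type*} [NormedAddCommGroup E] [InnerProductSpace ℝ E]

/-- The Lebesgue density of the standard Gaussian measure on `E`. -/
noncomputable def stdGaussianPDFReal (x : E) : ℝ :=
  (2 * Real.pi) ^ (-((finrank ℝ E : ℝ) / 2)) * Real.exp (-(1 / 2) * ‖x‖ ^ 2)

theorem stdGaussianPDFReal_nonneg (x : E) : 0 ≤ stdGaussianPDFReal x := by
  unfold stdGaussianPDFReal; positivity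

@[fun_prop]
theorem continuous_stdGaussianPDFReal : Continuous (stdGaussianPDFReal (E := E)) := by
  unfold stdGaussianPDFReal; fun_prop

theorem hasFDerivAt_stdGaussianPDFReal (x : E) :
    HasFDerivAt stdGaussianPDFReal (-stdGaussianPDFReal x • innerSL ℝ x) x := by
  have hexp := ((hasStrictFDerivAt_norm_sq x).hasFDerivAt.const_mul (-(1 / 2) : ℝ)).exp.const_mul
    ((2 * Real.pi) ^ (-((finrank ℝ E : ℝ) / 2)))
  refine hexp.congr_fderiv ?_
  ext y
  simp only [stdGaussianPDFReal, smul_apply, innerSL_apply_apply, smul_eq_mul, nsmul_eq_mul]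
  push_cast
  ring

variable [FiniteDimensional ℝ E] [MeasurableSpace E] [BorelSpace E]

theorem integrable_stdGaussianPDFReal : Integrable (stdGaussianPDFReal (E := E)) := by
  refine Integrable.const_mul ?_ _
  have hexp := (GaussianFourier.integrable_cexp_neg_mul_sq_norm_add (V := E) (b := 1 / 2)
    (by norm_num) 0 0).norm
  simpa [Complex.norm_exp, ← Complex.ofReal_pow] using hexp

theorem stdGaussian_eq_withDensity :
    stdGaussian E = volume.withDensity fun x ↦ ENNReal.ofReal (stdGaussianPDFReal x) := by
  have : IsFiniteMeasure (volume.withDensity fun x : E ↦ ENNReal.ofReal (stdGaussianPDFReal x)) :=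
    isFiniteMeasure_withDensity_ofReal integrable_stdGaussianPDFReal.2
  refine Measure.ext_of_charFun (funext fun t ↦ ?_)
  have hnorm : (((2 * Real.pi) ^ (-((finrank ℝ E : ℝ) / 2)) : ℝ) : ℂ) *
      (2 * Real.pi) ^ ((finrank ℝ E : ℂ) / 2) = 1 := by
    rw [Complex.ofReal_cpow (by positivity)]
    push_cast
    rw [← Complex.cpow_add _ _ (by simp [Real.pi_ne_zero]), neg_add_cancel, Complex.cpow_zero]
  rw [charFun_stdGaussian, charFun_apply,
    integral_withDensity_eq_integral_toReal_smul (by fun_prop) (by simp)]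
  calc Complex.exp (-‖t‖ ^ 2 / 2)
      = ((2 * Real.pi) ^ (-((finrank ℝ E : ℝ) / 2)) : ℝ) * ∫ x : E,
          Complex.exp (-(1 / 2) * ‖x‖ ^ 2 + Complex.I * ⟪t, x⟫_ℝ) := by
        rw [GaussianFourier.integral_cexp_neg_mul_sq_norm_add (by norm_num), div_div_eq_mul_div,
          div_one, mul_comm (Real.pi : ℂ), ← mul_assoc, hnorm, one_mul, Complex.I_sq]
        ring_nf
    _ = _ := by
        rw [← integral_const_mul]
        refine integral_congr_ae (.of_forall fun x ↦ ?_)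
        simp only [ENNReal.toReal_ofReal (stdGaussianPDFReal_nonneg x), real_inner_comm x t]
        simp only [stdGaussianPDFReal, Complex.real_smul, Complex.ofReal_mul, Complex.ofReal_exp,
          mul_assoc, Complex.exp_add]
        push_cast
        ring_nf

theorem integrable_stdGaussian_iff {f : E → ℝ} :
    Integrable f (stdGaussian E) ↔ Integrable fun x ↦ stdGaussianPDFReal x * f x := by
  rw [stdGaussian_eq_withDensity,
    integrable_withDensity_iff_integrable_smul' (by fun_prop) (by simp)]
  simp only [ENNReal.toReal_ofReal (stdGaussianPDFReal_nonneg _), smul_eq_mul]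

theorem integral_stdGaussian_eq (f : E → ℝ) :
    ∫ x, f x ∂(stdGaussian E) = ∫ x, stdGaussianPDFReal x * f x := by
  rw [stdGaussian_eq_withDensity,
    integral_withDensity_eq_integral_toReal_smul (by fun_prop) (by simp)]
  simp only [ENNReal.toReal_ofReal (stdGaussianPDFReal_nonneg _), smul_eq_mul]

theorem integral_inner_mul_stdGaussian {f : E → ℝ} {f' : E → StrongDual ℝ E} (v : E)
    (hf : ∀ x, HasFDerivAt f (f' x) x) (hint : Integrable f (stdGaussian E))
    (hint_mul : Integrable (fun x ↦ ⟪x, v⟫_ℝ * f x) (stdGaussian E))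
    (hint_deriv : Integrable (fun x ↦ f' x v) (stdGaussian E)) :
    ∫ x, ⟪x, v⟫_ℝ * f x ∂(stdGaussian E) = ∫ x, f' x v ∂(stdGaussian E) := by
  have hf' : ∀ x, fderiv ℝ f x = f' x := fun x ↦ (hf x).fderiv
  have hpdf (x : E) : fderiv ℝ stdGaussianPDFReal x v = -(stdGaussianPDFReal x * ⟪x, v⟫_ℝ) := by
    simp [(hasFDerivAt_stdGaussianPDFReal x).fderiv]
  rw [integrable_stdGaussian_iff] at hint hint_mul hint_deriv
  have hparts := integral_mul_fderiv_eq_neg_fderiv_mul_of_integrable (μ := volume) (v := v)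
    (f := stdGaussianPDFReal) (g := f) (by simpa [hpdf, mul_assoc] using hint_mul)
    (by simpa [hf'] using hint_deriv) hint
    (fun x _ ↦ (hasFDerivAt_stdGaussianPDFReal x).differentiableAt)
    (fun x _ ↦ (hf x).differentiableAt)
  simp only [hf', hpdf, neg_mul, integral_neg, neg_neg, mul_assoc] at hparts
  rw [integral_stdGaussian_eq, integral_stdGaussian_eq, hparts]

theorem map_adjoint_stdGaussian {F : Type*} [NormedAddCommGroup F] [InnerProductSpace ℝ F]
    [FiniteDimensional ℝ F] [MeasurableSpace F] [BorelSpace F] (L : F →ₗᵢ[ℝ] E) :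
    (stdGaussian E).map L.toContinuousLinearMap.adjoint = stdGaussian F := by
  have hcont := L.toContinuousLinearMap.adjoint.continuous
  have := Measure.isProbabilityMeasure_map (μ := stdGaussian E) hcont.aemeasurable
  refine Measure.ext_of_charFun (funext fun t ↦ ?_)
  rw [charFun_apply, integral_map hcont.aemeasurable (by fun_prop)]
  simp only [ContinuousLinearMap.adjoint_inner_left, ← charFun_apply, charFun_stdGaussian,
    LinearIsometry.coe_toContinuousLinearMap, L.norm_map]

theorem map_inner_stdGaussian (v : E) :
    (stdGaussian E).map (inner ℝ v) = gaussianReal 0 (‖v‖₊ ^ 2) := by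
  have hmap := IsGaussian.map_eq_gaussianReal (μ := stdGaussian E) (innerSL ℝ v)
  rw [integral_strongDual_stdGaussian, variance_dual_stdGaussian, innerSL_apply_norm] at hmap
  convert! hmap
  ext
  simp

theorem integral_abs_gaussianReal (v : ℝ≥0) :
    ∫ x, |x| ∂(gaussianReal 0 v) = √(2 * v / Real.pi) := by
  rcases eq_or_ne v 0 with rfl | hv
  · simp
  have : (0 : ℝ) < v := by positivity
  have hhalf : ∫ x in Ioi (0 : ℝ), x * Real.exp (-(2 * v : ℝ)⁻¹ * x ^ 2) = v := by
    have hgamma := integral_rpow_mul_exp_neg_mul_rpow (p := 2) (q := 1) (b := (2 * v : ℝ)⁻¹)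
      two_pos (by norm_num) (by positivity)
    norm_num [Real.rpow_neg_one] at hgamma ⊢
    linarith
  have hsqrt : √(2 * Real.pi * v) * √(2 * v / Real.pi) = 2 * v := by
    rw [← Real.sqrt_mul (by positivity), Real.sqrt_eq_iff_mul_self_eq_of_pos (by positivity)]
    field_simp
  calc ∫ x, |x| ∂(gaussianReal 0 v)
      = ∫ x : ℝ, (√(2 * Real.pi * v))⁻¹ * (|x| * Real.exp (-(2 * v : ℝ)⁻¹ * |x| ^ 2)) := by
        rw [integral_gaussianReal_eq_integral_smul hv]
        congr with x
        simp only [gaussianPDFReal_def, sq_abs, smul_eq_mul, sub_zero]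
        ring_nf
    _ = (√(2 * Real.pi * v))⁻¹ * (2 * v) := by
        rw [integral_const_mul,
          integral_comp_abs (f := fun x ↦ x * Real.exp (-(2 * v : ℝ)⁻¹ * x ^ 2)), hhalf]
    _ = √(2 * v / Real.pi) := (inv_mul_eq_iff_eq_mul₀ (by positivity)).2 hsqrt.symm

theorem integral_abs_inner_stdGaussian (v : E) :
    ∫ x, |⟪v, x⟫_ℝ| ∂(stdGaussian E) = √(2 / Real.pi) * ‖v‖ := by
  rw [← integral_map (φ := inner ℝ v) (f := fun r : ℝ ↦ |r|) (by fun_prop) (by fun_prop),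
    map_inner_stdGaussian, integral_abs_gaussianReal, mul_div_right_comm,
    Real.sqrt_mul (by positivity)]
  simp

theorem integral_comp_neg_stdGaussian (f : E → ℝ) :
    ∫ x, f (-x) ∂(stdGaussian E) = ∫ x, f x ∂(stdGaussian E) := by
  have hmap := stdGaussian_map (LinearIsometryEquiv.neg ℝ (E := E))
  nth_rw 2 [← hmap]
  exact (integral_map_equiv (MeasurableEquiv.neg E) f).symm

end StdGaussian

section LogSumExp

variable {ι : Type*} [Fintype ι]

/-- The function `log ∑ᵢ exp zᵢ`, a smooth approximation of `maxᵢ zᵢ` up to the additive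
constant `log (card ι)`. -/
noncomputable def logSumExp (z : ι → ℝ) : ℝ := Real.log (∑ i, Real.exp (z i))

/-- The probability weights `exp zᵢ / ∑ⱼ exp zⱼ`, which form the gradient of `logSumExp`. -/
noncomputable def softmax (z : ι → ℝ) (i : ι) : ℝ := Real.exp (z i) / ∑ j, Real.exp (z j)

theorem softmax_nonneg (z : ι → ℝ) (i : ι) : 0 ≤ softmax z i := by
  unfold softmax; positivity

theorem hasFDerivAt_sum_exp (z : ι → ℝ) :
    HasFDerivAt (fun z : ι → ℝ ↦ ∑ i, Real.exp (z i))
      (∑ i, Real.exp (z i) • ContinuousLinearMap.proj (R := ℝ) (φ := fun _ : ι ↦ ℝ) i) z :=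
  HasFDerivAt.fun_sum fun i _ ↦ (hasFDerivAt_apply i z).exp

variable [Nonempty ι]

theorem sum_exp_pos (z : ι → ℝ) : 0 < ∑ i, Real.exp (z i) :=
  Finset.sum_pos (fun _ _ ↦ Real.exp_pos _) Finset.univ_nonempty

theorem sum_softmax (z : ι → ℝ) : ∑ i, softmax z i = 1 := by
  simp only [softmax, ← Finset.sum_div, div_self (sum_exp_pos z).ne']

theorem softmax_le_one (z : ι → ℝ) (i : ι) : softmax z i ≤ 1 :=
  sum_softmax z ▸ Finset.single_le_sum (fun j _ ↦ softmax_nonneg z j) (Finset.mem_univ i)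

theorem hasFDerivAt_logSumExp (z : ι → ℝ) :
    HasFDerivAt logSumExp
      (∑ i, softmax z i • ContinuousLinearMap.proj (R := ℝ) (φ := fun _ : ι ↦ ℝ) i) z := by
  refine ((hasFDerivAt_sum_exp z).log (sum_exp_pos z).ne').congr_fderiv ?_
  simp only [Finset.smul_sum, smul_smul, softmax, div_eq_inv_mul]

theorem hasFDerivAt_softmax (z : ι → ℝ) (i : ι) :
    HasFDerivAt (fun z ↦ softmax z i) (softmax z i •
      (ContinuousLinearMap.proj (R := ℝ) (φ := fun _ : ι ↦ ℝ) i -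
        ∑ j, softmax z j • ContinuousLinearMap.proj (R := ℝ) (φ := fun _ : ι ↦ ℝ) j)) z := by
  have hexp (z : ι → ℝ) : softmax z i = Real.exp (z i - logSumExp z) := by
    rw [Real.exp_sub, logSumExp, Real.exp_log (sum_exp_pos z), softmax]
  simp only [hexp]
  simpa only [← hexp] using ((hasFDerivAt_apply i z).fun_sub (hasFDerivAt_logSumExp z)).exp

@[fun_prop]
theorem continuous_logSumExp : Continuous (logSumExp (ι := ι)) :=
  continuous_iff_continuousAt.2 fun z ↦ (hasFDerivAt_logSumExp z).continuousAt

@[fun_prop]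
theorem continuous_softmax : Continuous (softmax (ι := ι)) :=
  continuous_pi fun i ↦ continuous_iff_continuousAt.2 fun z ↦ (hasFDerivAt_softmax z i).continuousAt

theorem iSup_le_logSumExp (z : ι → ℝ) : ⨆ i, z i ≤ logSumExp z := by
  refine ciSup_le fun i ↦ (Real.le_log_iff_exp_le (sum_exp_pos z)).2 ?_
  exact Finset.single_le_sum (fun j _ ↦ (Real.exp_pos (z j)).le) (Finset.mem_univ i)

theorem logSumExp_le_iSup_add_log_card (z : ι → ℝ) :
    logSumExp z ≤ (⨆ i, z i) + Real.log (Fintype.card ι) := by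
  rw [logSumExp, Real.log_le_iff_le_exp (sum_exp_pos z), Real.exp_add,
    Real.exp_log (by exact_mod_cast Fintype.card_pos), mul_comm, ← nsmul_eq_mul]
  refine Finset.sum_le_card_nsmul _ _ _ fun i _ ↦ Real.exp_le_exp.2 ?_
  exact le_ciSup (finite_range z).bddAbove i

theorem abs_iSup_le_norm (z : ι → ℝ) : |⨆ i, z i| ≤ ‖z‖ := by
  obtain ⟨i, hi⟩ := exists_eq_ciSup_of_finite (f := z)
  exact hi ▸ norm_le_pi_norm z i

theorem abs_logSumExp_le (z : ι → ℝ) : |logSumExp z| ≤ ‖z‖ + Real.log (Fintype.card ι) := by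
  have hsup := abs_le.1 (abs_iSup_le_norm z)
  have hlog : 0 ≤ Real.log (Fintype.card ι) := Real.log_natCast_nonneg _
  exact abs_le.2 ⟨by linarith [iSup_le_logSumExp z], by linarith [logSumExp_le_iSup_add_log_card z]⟩

theorem abs_sum_softmax_mul_le (z y : ι → ℝ) : |∑ i, softmax z i * y i| ≤ ‖y‖ :=
  calc |∑ i, softmax z i * y i| ≤ ∑ i, |softmax z i * y i| := Finset.abs_sum_le_sum_abs _ _
    _ ≤ ∑ i, softmax z i * ‖y‖ := Finset.sum_le_sum fun i _ ↦ by
        rw [abs_mul, abs_of_nonneg (softmax_nonneg z i)]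
        exact mul_le_mul_of_nonneg_left (norm_le_pi_norm y i) (softmax_nonneg z i)
    _ = ‖y‖ := by rw [← Finset.sum_mul, sum_softmax, one_mul]

end LogSumExp

section GaussianInterpolation

variable {ι : Type*} [Fintype ι]
  {E : Type*} [NormedAddCommGroup E] [InnerProductSpace ℝ E]

theorem norm_inner_apply_le (c : ι → E) (x : E) : ‖fun i ↦ ⟪c i, x⟫_ℝ‖ ≤ ‖c‖ * ‖x‖ :=
  (pi_norm_le_iff_of_nonneg (by positivity)).2 fun i ↦ (norm_inner_le_norm _ _).trans <| by
    gcongr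
    exact norm_le_pi_norm c i

theorem sum_mul_inner_sub_eq_half_sum_sum {p : ι → ℝ} (hp : ∑ i, p i = 1) (c d : ι → E) :
    ∑ i, p i * (⟪c i, d i⟫_ℝ - ∑ j, p j * ⟪c j, d i⟫_ℝ) =
      1 / 2 * ∑ i, ∑ j, p i * p j * ⟪c i - c j, d i - d j⟫_ℝ := by
  have hdiag : ∑ i, ∑ j, p i * p j * ⟪c i, d i⟫_ℝ = ∑ i, p i * ⟪c i, d i⟫_ℝ := by
    simp only [← Finset.sum_mul, ← Finset.mul_sum, hp, mul_one]
  have hdiag' : ∑ i, ∑ j, p i * p j * ⟪c j, d j⟫_ℝ = ∑ i, p i * ⟪c i, d i⟫_ℝ := by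
    rw [Finset.sum_comm]
    simp only [← Finset.sum_mul, hp, one_mul]
  have hcross : ∑ i, ∑ j, p i * p j * ⟪c j, d i⟫_ℝ = ∑ i, p i * ∑ j, p j * ⟪c j, d i⟫_ℝ := by
    simp only [Finset.mul_sum, mul_assoc]
  have hcross' : ∑ i, ∑ j, p i * p j * ⟪c i, d j⟫_ℝ = ∑ i, p i * ∑ j, p j * ⟪c j, d i⟫_ℝ := by
    rw [Finset.sum_comm, ← hcross]
    simp only [mul_comm]
  simp only [inner_sub_left, inner_sub_right, mul_sub, Finset.sum_sub_distrib, hdiag, hdiag',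
    hcross, hcross']
  ring

theorem integrable_comp_inner_stdGaussian [FiniteDimensional ℝ E] [MeasurableSpace E]
    [BorelSpace E] {f : (ι → ℝ) → ℝ} (hf : Continuous f) {C : ℝ} (hfC : ∀ z, |f z| ≤ ‖z‖ + C)
    (c : ι → E) :
    Integrable (fun x ↦ f fun i ↦ ⟪c i, x⟫_ℝ) (stdGaussian E) := by
  have hbound : Integrable (fun x : E ↦ ‖c‖ * ‖x‖ + C) (stdGaussian E) :=
    (IsGaussian.integrable_id.norm.const_mul _).add (integrable_const _)
  refine hbound.mono' (Continuous.aestronglyMeasurable (by fun_prop))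
    (.of_forall fun x ↦ (hfC _).trans ?_)
  gcongr
  exact norm_inner_apply_le c x

/-- The derivative of `c ↦ logSumExp (⟪c i, x⟫)ᵢ` at `c`. -/
noncomputable def fderivLogSumExpInner (c : ι → E) (x : E) : (ι → E) →L[ℝ] ℝ :=
  ∑ i, softmax (fun j ↦ ⟪c j, x⟫_ℝ) i •
    (innerSL ℝ x).comp (ContinuousLinearMap.proj (R := ℝ) (φ := fun _ : ι ↦ E) i)

theorem fderivLogSumExpInner_apply (c : ι → E) (x : E) (d : ι → E) :
    fderivLogSumExpInner c x d = ∑ i, softmax (fun j ↦ ⟪c j, x⟫_ℝ) i * ⟪x, d i⟫_ℝ := by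
  simp [fderivLogSumExpInner]

variable [Nonempty ι]

theorem norm_fderivLogSumExpInner_le (c : ι → E) (x : E) : ‖fderivLogSumExpInner c x‖ ≤ ‖x‖ := by
  refine ContinuousLinearMap.opNorm_le_bound _ (norm_nonneg x) fun d ↦ ?_
  simp only [fderivLogSumExpInner_apply, real_inner_comm (d _) x, Real.norm_eq_abs, mul_comm ‖x‖]
  exact (abs_sum_softmax_mul_le _ _).trans (norm_inner_apply_le d x)

@[fun_prop]
theorem continuous_fderivLogSumExpInner (c : ι → E) : Continuous (fderivLogSumExpInner c) := by
  unfold fderivLogSumExpInner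
  fun_prop

theorem hasFDerivAt_logSumExp_inner (c : ι → E) (x : E) :
    HasFDerivAt (fun c : ι → E ↦ logSumExp fun i ↦ ⟪c i, x⟫_ℝ) (fderivLogSumExpInner c x) c := by
  have hinner : HasFDerivAt (fun c : ι → E ↦ fun i ↦ ⟪c i, x⟫_ℝ) (ContinuousLinearMap.pi fun i ↦
      (innerSL ℝ x).comp (ContinuousLinearMap.proj (R := ℝ) (φ := fun _ : ι ↦ E) i)) c :=
    hasFDerivAt_pi.2 fun i ↦ by
      simp only [real_inner_comm x]
      exact (innerSL ℝ x).hasFDerivAt.comp c (hasFDerivAt_apply i c)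
  refine ((hasFDerivAt_logSumExp fun i ↦ ⟪c i, x⟫_ℝ).comp c hinner).congr_fderiv ?_
  ext
  simp [fderivLogSumExpInner_apply]

theorem hasFDerivAt_softmax_inner (c : ι → E) (i : ι) (x : E) :
    HasFDerivAt (fun x ↦ softmax (fun j ↦ ⟪c j, x⟫_ℝ) i)
      (softmax (fun j ↦ ⟪c j, x⟫_ℝ) i •
        (innerSL ℝ (c i) - ∑ j, softmax (fun k ↦ ⟪c k, x⟫_ℝ) j • innerSL ℝ (c j))) x := by
  have hinner : HasFDerivAt (fun x ↦ fun j ↦ ⟪c j, x⟫_ℝ)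
      (ContinuousLinearMap.pi fun j ↦ innerSL ℝ (c j)) x :=
    hasFDerivAt_pi.2 fun j ↦ (innerSL ℝ (c j)).hasFDerivAt
  refine ((hasFDerivAt_softmax (fun j ↦ ⟪c j, x⟫_ℝ) i).comp x hinner).congr_fderiv ?_
  ext
  simp

variable [FiniteDimensional ℝ E] [MeasurableSpace E] [BorelSpace E]

theorem integrable_logSumExp_inner (c : ι → E) :
    Integrable (fun x ↦ logSumExp fun i ↦ ⟪c i, x⟫_ℝ) (stdGaussian E) :=
  integrable_comp_inner_stdGaussian continuous_logSumExp abs_logSumExp_le c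

theorem hasFDerivAt_integral_logSumExp_inner (c : ι → E) :
    HasFDerivAt (fun c : ι → E ↦ ∫ x, logSumExp (fun i ↦ ⟪c i, x⟫_ℝ) ∂(stdGaussian E))
      (∫ x, fderivLogSumExpInner c x ∂(stdGaussian E)) c :=
  hasFDerivAt_integral_of_dominated_of_fderiv_le (bound := norm) univ_mem
    (.of_forall fun c ↦ (integrable_logSumExp_inner c).1) (integrable_logSumExp_inner c)
    (Continuous.aestronglyMeasurable (by fun_prop))
    (.of_forall fun x c _ ↦ norm_fderivLogSumExpInner_le c x)
    IsGaussian.integrable_id.norm (.of_forall fun x c _ ↦ hasFDerivAt_logSumExp_inner c x)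

theorem integrable_inner_mul_softmax_inner (c : ι → E) (i : ι) (v : E) :
    Integrable (fun x ↦ ⟪x, v⟫_ℝ * softmax (fun j ↦ ⟪c j, x⟫_ℝ) i) (stdGaussian E) := by
  refine (IsGaussian.integrable_id.norm.mul_const ‖v‖).mono'
    (Continuous.aestronglyMeasurable (by fun_prop)) (.of_forall fun x ↦ ?_)
  rw [norm_mul, Real.norm_of_nonneg (softmax_nonneg _ i)]
  exact (mul_le_of_le_one_right (norm_nonneg _) (softmax_le_one _ i)).trans (norm_inner_le_norm x v)

theorem integrable_softmax_inner_mul_sub (c : ι → E) (i : ι) (v : E) :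
    Integrable (fun x ↦ softmax (fun j ↦ ⟪c j, x⟫_ℝ) i *
      (⟪c i, v⟫_ℝ - ∑ j, softmax (fun k ↦ ⟪c k, x⟫_ℝ) j * ⟪c j, v⟫_ℝ)) (stdGaussian E) := by
  refine .of_bound (Continuous.aestronglyMeasurable (by fun_prop))
    (|⟪c i, v⟫_ℝ| + ‖fun j ↦ ⟪c j, v⟫_ℝ‖) (.of_forall fun x ↦ ?_)
  rw [norm_mul, Real.norm_of_nonneg (softmax_nonneg _ i)]
  refine (mul_le_of_le_one_left (norm_nonneg _) (softmax_le_one _ i)).trans ?_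
  exact (norm_sub_le _ _).trans (add_le_add_right (abs_sum_softmax_mul_le _ _) _)

theorem integral_inner_mul_softmax_inner (c : ι → E) (i : ι) (v : E) :
    ∫ x, ⟪x, v⟫_ℝ * softmax (fun j ↦ ⟪c j, x⟫_ℝ) i ∂(stdGaussian E) =
      ∫ x, softmax (fun j ↦ ⟪c j, x⟫_ℝ) i *
        (⟪c i, v⟫_ℝ - ∑ j, softmax (fun k ↦ ⟪c k, x⟫_ℝ) j * ⟪c j, v⟫_ℝ) ∂(stdGaussian E) := by
  have hsoftmax : Integrable (fun x ↦ softmax (fun j ↦ ⟪c j, x⟫_ℝ) i) (stdGaussian E) :=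
    .of_bound (Continuous.aestronglyMeasurable (by fun_prop)) 1 (.of_forall fun x ↦ by
      rw [Real.norm_of_nonneg (softmax_nonneg _ i)]
      exact softmax_le_one _ i)
  rw [integral_inner_mul_stdGaussian v (hasFDerivAt_softmax_inner c i) hsoftmax
    (integrable_inner_mul_softmax_inner c i v)
    (by simpa using integrable_softmax_inner_mul_sub c i v)]
  simp

theorem integral_fderivLogSumExpInner_apply (c d : ι → E) :
    (∫ x, fderivLogSumExpInner c x ∂(stdGaussian E)) d =
      ∫ x, 1 / 2 * ∑ i, ∑ j, softmax (fun k ↦ ⟪c k, x⟫_ℝ) i * softmax (fun k ↦ ⟪c k, x⟫_ℝ) j *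
        ⟪c i - c j, d i - d j⟫_ℝ ∂(stdGaussian E) := by
  have happly := ContinuousLinearMap.integral_apply (μ := stdGaussian E)
    (φ := fderivLogSumExpInner c)
    (IsGaussian.integrable_id.norm.mono' (Continuous.aestronglyMeasurable (by fun_prop))
      (.of_forall (norm_fderivLogSumExpInner_le c))) d
  calc (∫ x, fderivLogSumExpInner c x ∂(stdGaussian E)) d
      = ∫ x, ∑ i, ⟪x, d i⟫_ℝ * softmax (fun j ↦ ⟪c j, x⟫_ℝ) i ∂(stdGaussian E) := by
        simp only [happly, fderivLogSumExpInner_apply, mul_comm]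
    _ = ∫ x, ∑ i, softmax (fun j ↦ ⟪c j, x⟫_ℝ) i *
          (⟪c i, d i⟫_ℝ - ∑ j, softmax (fun k ↦ ⟪c k, x⟫_ℝ) j * ⟪c j, d i⟫_ℝ)
          ∂(stdGaussian E) := by
        rw [integral_finsetSum _ fun i _ ↦ integrable_inner_mul_softmax_inner c i (d i),
          integral_finsetSum _ fun i _ ↦ integrable_softmax_inner_mul_sub c i (d i)]
        exact Finset.sum_congr rfl fun i _ ↦ integral_inner_mul_softmax_inner c i (d i)
    _ = _ := by simp only [sum_mul_inner_sub_eq_half_sum_sum (sum_softmax _)]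

theorem integral_fderivLogSumExpInner_apply_nonpos {c d : ι → E}
    (hcd : ∀ i j, ⟪c i - c j, d i - d j⟫_ℝ ≤ 0) :
    (∫ x, fderivLogSumExpInner c x ∂(stdGaussian E)) d ≤ 0 := by
  rw [integral_fderivLogSumExpInner_apply]
  refine integral_nonpos fun x ↦ mul_nonpos_of_nonneg_of_nonpos (by norm_num) ?_
  exact Finset.sum_nonpos fun i _ ↦ Finset.sum_nonpos fun j _ ↦ mul_nonpos_of_nonneg_of_nonpos
    (mul_nonneg (softmax_nonneg _ i) (softmax_nonneg _ j)) (hcd i j)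

theorem integral_logSumExp_inner_le (A B : ι → E) (horth : ∀ i j, ⟪A i, B j⟫_ℝ = 0)
    (hdist : ∀ i j, ‖B i - B j‖ ≤ ‖A i - A j‖) :
    ∫ x, logSumExp (fun i ↦ ⟪B i, x⟫_ℝ) ∂(stdGaussian E) ≤
      ∫ x, logSumExp (fun i ↦ ⟪A i, x⟫_ℝ) ∂(stdGaussian E) := by
  let c (θ : ℝ) : ι → E := Real.cos θ • A + Real.sin θ • B
  let c' (θ : ℝ) : ι → E := -Real.sin θ • A + Real.cos θ • B
  have hc (θ : ℝ) : HasDerivAt c (c' θ) θ :=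
    ((Real.hasDerivAt_cos θ).smul_const A).add ((Real.hasDerivAt_sin θ).smul_const B)
  have hinner (θ : ℝ) (i j : ι) : ⟪c θ i - c θ j, c' θ i - c' θ j⟫_ℝ =
      Real.sin θ * Real.cos θ * (‖B i - B j‖ ^ 2 - ‖A i - A j‖ ^ 2) := by
    have hperp : ⟪A i - A j, B i - B j⟫_ℝ = 0 := by simp [inner_sub_left, inner_sub_right, horth]
    have hcθ : c θ i - c θ j = Real.cos θ • (A i - A j) + Real.sin θ • (B i - B j) := by
      simp only [c, Pi.add_apply, Pi.smul_apply]; module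
    have hc'θ : c' θ i - c' θ j = -Real.sin θ • (A i - A j) + Real.cos θ • (B i - B j) := by
      simp only [c', Pi.add_apply, Pi.smul_apply]; module
    rw [hcθ, hc'θ]
    simp only [inner_add_left, inner_add_right, real_inner_smul_left, real_inner_smul_right,
      real_inner_self_eq_norm_sq, hperp, real_inner_comm (A i - A j) (B i - B j)]
    ring
  have hderiv (θ : ℝ) := (hasFDerivAt_integral_logSumExp_inner (c θ)).comp_hasDerivAt θ (hc θ)
  have hanti : AntitoneOn (fun θ ↦ ∫ x, logSumExp (fun i ↦ ⟪c θ i, x⟫_ℝ) ∂(stdGaussian E))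
      (Icc 0 (Real.pi / 2)) := by
    refine antitoneOn_of_hasDerivWithinAt_nonpos (convex_Icc _ _)
      (fun θ _ ↦ (hderiv θ).continuousAt.continuousWithinAt)
      (fun θ _ ↦ (hderiv θ).hasDerivWithinAt) fun θ hθ ↦
        integral_fderivLogSumExpInner_apply_nonpos fun i j ↦ ?_
    obtain ⟨hθ0, hθ1⟩ := interior_Icc.subset hθ
    rw [hinner]
    refine mul_nonpos_of_nonneg_of_nonpos (mul_nonneg ?_ ?_) (sub_nonpos.2 ?_)
    · exact Real.sin_nonneg_of_nonneg_of_le_pi hθ0.le (by linarith [Real.pi_pos])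
    · exact Real.cos_nonneg_of_neg_pi_div_two_le_of_le (by linarith) hθ1.le
    · exact pow_le_pow_left₀ (norm_nonneg _) (hdist i j) 2
  simpa [c] using hanti (left_mem_Icc.2 (by positivity)) (right_mem_Icc.2 (by positivity))
    (by positivity)

end GaussianInterpolation

section SudakovFernique

theorem le_of_forall_mul_le_mul_add {u v C : ℝ} (h : ∀ s > 0, s * u ≤ s * v + C) : u ≤ v := by
  by_contra! huv
  have := h ((|C| + 1) / (u - v)) (div_pos (by positivity) (sub_pos.2 huv))
  have heq : (|C| + 1) / (u - v) * (u - v) = |C| + 1 := div_mul_cancel₀ _ (sub_pos.2 huv).ne'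
  linarith [le_abs_self C]

variable {ι : Type*} [Finite ι] [Nonempty ι]
  {E : Type*} [NormedAddCommGroup E] [InnerProductSpace ℝ E]
  [FiniteDimensional ℝ E] [MeasurableSpace E] [BorelSpace E]

theorem integrable_iSup_inner (c : ι → E) :
    Integrable (fun x ↦ ⨆ i, ⟪c i, x⟫_ℝ) (stdGaussian E) := by
  cases nonempty_fintype ι
  refine integrable_comp_inner_stdGaussian (f := fun z ↦ ⨆ i, z i) (C := 0) ?_ ?_ c
  · simp only [← Finset.sup'_univ_eq_ciSup]
    fun_prop
  · simpa using abs_iSup_le_norm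

theorem integral_iSup_inner_le_of_inner_eq_zero (A B : ι → E) (horth : ∀ i j, ⟪A i, B j⟫_ℝ = 0)
    (hdist : ∀ i j, ‖B i - B j‖ ≤ ‖A i - A j‖) :
    ∫ x, ⨆ i, ⟪B i, x⟫_ℝ ∂(stdGaussian E) ≤ ∫ x, ⨆ i, ⟪A i, x⟫_ℝ ∂(stdGaussian E) := by
  cases nonempty_fintype ι
  refine le_of_forall_mul_le_mul_add (C := Real.log (Fintype.card ι)) fun s hs ↦ ?_
  have hscale (c : ι → E) : s * ∫ x, ⨆ i, ⟪c i, x⟫_ℝ ∂(stdGaussian E) =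
      ∫ x, ⨆ i, ⟪(s • c) i, x⟫_ℝ ∂(stdGaussian E) := by
    simp only [← integral_const_mul, Real.mul_iSup_of_nonneg hs.le, Pi.smul_apply,
      real_inner_smul_left]
  rw [hscale, hscale]
  calc ∫ x, ⨆ i, ⟪(s • B) i, x⟫_ℝ ∂(stdGaussian E)
      ≤ ∫ x, logSumExp (fun i ↦ ⟪(s • B) i, x⟫_ℝ) ∂(stdGaussian E) :=
        integral_mono (integrable_iSup_inner _) (integrable_logSumExp_inner _)
          fun x ↦ iSup_le_logSumExp _
    _ ≤ ∫ x, logSumExp (fun i ↦ ⟪(s • A) i, x⟫_ℝ) ∂(stdGaussian E) := by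
        refine integral_logSumExp_inner_le _ _ (fun i j ↦ ?_) fun i j ↦ ?_
        · simp [real_inner_smul_left, real_inner_smul_right, horth]
        · simp only [Pi.smul_apply, ← smul_sub, norm_smul]
          exact mul_le_mul_of_nonneg_left (hdist i j) (norm_nonneg s)
    _ ≤ ∫ x, ((⨆ i, ⟪(s • A) i, x⟫_ℝ) + Real.log (Fintype.card ι)) ∂(stdGaussian E) :=
        integral_mono (integrable_logSumExp_inner _)
          ((integrable_iSup_inner _).add (integrable_const _))
          fun x ↦ logSumExp_le_iSup_add_log_card _
    _ = (∫ x, ⨆ i, ⟪(s • A) i, x⟫_ℝ ∂(stdGaussian E)) + Real.log (Fintype.card ι) := by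
        rw [integral_add (integrable_iSup_inner _) (integrable_const _)]
        simp

theorem integral_iSup_inner_linearIsometry {F : Type*} [NormedAddCommGroup F]
    [InnerProductSpace ℝ F] [FiniteDimensional ℝ F] [MeasurableSpace F] [BorelSpace F]
    (L : E →ₗᵢ[ℝ] F) (c : ι → E) :
    ∫ x, ⨆ i, ⟪L (c i), x⟫_ℝ ∂(stdGaussian F) = ∫ x, ⨆ i, ⟪c i, x⟫_ℝ ∂(stdGaussian E) := by
  rw [← map_adjoint_stdGaussian L, integral_map (by fun_prop)]
  · simp only [ContinuousLinearMap.adjoint_inner_right, LinearIsometry.coe_toContinuousLinearMap]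
  · rw [map_adjoint_stdGaussian]
    exact (integrable_iSup_inner c).1

/-- The **Sudakov–Fernique inequality** for finite Gaussian families. -/
theorem integral_iSup_inner_le {F : Type*} [NormedAddCommGroup F] [InnerProductSpace ℝ F]
    [FiniteDimensional ℝ F] [MeasurableSpace F] [BorelSpace F] (a : ι → E) (b : ι → F)
    (hdist : ∀ i j, dist (b i) (b j) ≤ dist (a i) (a j)) :
    ∫ x, ⨆ i, ⟪b i, x⟫_ℝ ∂(stdGaussian F) ≤ ∫ x, ⨆ i, ⟪a i, x⟫_ℝ ∂(stdGaussian E) := by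
  let inl : E →ₗᵢ[ℝ] WithLp 2 (E × F) :=
    ⟨(WithLp.linearEquiv 2 ℝ (E × F)).symm ∘ₗ LinearMap.inl ℝ E F, fun x ↦ by simp⟩
  let inr : F →ₗᵢ[ℝ] WithLp 2 (E × F) :=
    ⟨(WithLp.linearEquiv 2 ℝ (E × F)).symm ∘ₗ LinearMap.inr ℝ E F, fun x ↦ by simp⟩
  rw [← integral_iSup_inner_linearIsometry inl, ← integral_iSup_inner_linearIsometry inr]
  refine integral_iSup_inner_le_of_inner_eq_zero _ _ (fun i j ↦ ?_) fun i j ↦ ?_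
  · simp [inl, inr, WithLp.prod_inner_apply]
  · simpa only [← dist_eq_norm, LinearIsometry.dist_map] using hdist i j

end SudakovFernique

section CauchyFormula

variable {E : Type*} [NormedAddCommGroup E] [InnerProductSpace ℝ E]

theorem volume_image_inner_segment (g p q : E) :
    volume (inner ℝ g '' segment ℝ p q) = ENNReal.ofReal |⟪q - p, g⟫_ℝ| := by
  have himage := image_segment ℝ (innerSL ℝ g).toLinearMap.toAffineMap p q
  simp only [LinearMap.coe_toAffineMap, ContinuousLinearMap.coe_coe, coe_innerSL_apply] at himage
  rw [himage, segment_eq_uIcc, Real.volume_interval, ← inner_sub_right, real_inner_comm]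

theorem lintegral_volume_image_inner_segment [FiniteDimensional ℝ E] [MeasurableSpace E]
    [BorelSpace E] (p q : E) :
    ∫⁻ g, volume (inner ℝ g '' segment ℝ p q) ∂(stdGaussian E) =
      ENNReal.ofReal √(2 / Real.pi) * μH[1] (segment ℝ p q) := by
  have hint : Integrable (fun g ↦ |⟪q - p, g⟫_ℝ|) (stdGaussian E) :=
    (IsGaussian.integrable_id.const_inner (q - p)).abs
  simp only [volume_image_inner_segment]
  rw [← ofReal_integral_eq_lintegral_ofReal hint (.of_forall fun _ ↦ abs_nonneg _),
    integral_abs_inner_stdGaussian, ENNReal.ofReal_mul (by positivity), hausdorffMeasure_segment,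
    edist_comm, edist_dist, dist_eq_norm]

variable [Fact (finrank ℝ E = 2)] {K : Set E}

theorem exists_face_eq_segment (hK : IsCompact K) (hconv : Convex ℝ K) (v : edgeNormals K) :
    ∃ p q, face K v = segment ℝ p q :=
  exists_eq_segment_of_inner_eq (isCompact_face hK) (convex_face hconv) v.2.2.nonempty
    (ne_zero_of_norm_ne_zero (v.2.1 ▸ one_ne_zero)) fun _ hx _ hy ↦ inner_eq_of_mem_face hx hy

theorem two_mul_lintegral_volume_image_inner [FiniteDimensional ℝ E] [MeasurableSpace E]
    [BorelSpace E] (hK : IsCompact K) (hconv : Convex ℝ K) (hint : (interior K).Nonempty)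
    (hcount : (extremePoints ℝ K).Countable) :
    2 * ∫⁻ g, volume (inner ℝ g '' K) ∂(stdGaussian E) =
      ENNReal.ofReal √(2 / Real.pi) * μH[1] (frontier K) := by
  have : Countable (edgeNormals K) := (countable_edgeNormals hK hconv hcount).to_subtype
  have hmeas (v : edgeNormals K) : Measurable fun g : E ↦ volume (inner ℝ g '' face K v) := by
    obtain ⟨p, q, hpq⟩ := exists_face_eq_segment hK hconv v
    simp only [hpq, volume_image_inner_segment]
    fun_prop
  have hface (v : edgeNormals K) : ∫⁻ g, volume (inner ℝ g '' face K v) ∂(stdGaussian E) =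
      ENNReal.ofReal √(2 / Real.pi) * μH[1] (face K v) := by
    obtain ⟨p, q, hpq⟩ := exists_face_eq_segment hK hconv v
    rw [hpq, lintegral_volume_image_inner_segment]
  calc 2 * ∫⁻ g, volume (inner ℝ g '' K) ∂(stdGaussian E)
      = ∫⁻ g, ∑' v : edgeNormals K, volume (inner ℝ g '' face K v) ∂(stdGaussian E) := by
        simp only [tsum_volume_image_face hK hconv hint hcount,
          lintegral_const_mul' _ _ ENNReal.ofNat_ne_top]
    _ = ENNReal.ofReal √(2 / Real.pi) * μH[1] (frontier K) := by
        rw [lintegral_tsum fun v : edgeNormals K ↦ (hmeas v).aemeasurable,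
          hausdorffMeasure_frontier_eq_tsum hK hconv hint hcount, ← ENNReal.tsum_mul_left]
        simp only [hface]

/-- **Cauchy's formula**, averaging over Gaussian directions instead of the unit circle. -/
theorem ofReal_sqrt_mul_planePerimeter {K : Set (EuclideanSpace ℝ (Fin 2))} (hK : IsCompact K)
    (hconv : Convex ℝ K) (hne : K.Nonempty) (hcount : (extremePoints ℝ K).Countable) :
    ENNReal.ofReal √(2 / Real.pi) * planePerimeter K =
      2 * ∫⁻ g, volume (inner ℝ g '' K) ∂(stdGaussian (EuclideanSpace ℝ (Fin 2))) := by
  have : Fact (finrank ℝ (EuclideanSpace ℝ (Fin 2)) = 2) := ⟨finrank_euclideanSpace_fin⟩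
  rw [planePerimeter]
  split_ifs with hint
  · exact (two_mul_lintegral_volume_image_inner hK hconv hint hcount).symm
  · obtain ⟨p, q, rfl⟩ :=
      exists_eq_segment_of_interior_eq_empty hK hconv hne (not_nonempty_iff_eq_empty.1 hint)
    rw [lintegral_volume_image_inner_segment, mul_left_comm]

end CauchyFormula

section ConvexHull

variable {ι : Type*} [Finite ι] [Nonempty ι]

theorem convexHull_range_eq_Icc (f : ι → ℝ) :
    convexHull ℝ (range f) = Icc (-⨆ i, -f i) (⨆ i, f i) := by
  refine (convexHull_min ?_ (convex_Icc _ _)).antisymm ?_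
  · rintro _ ⟨i, rfl⟩
    exact ⟨neg_le.1 (le_ciSup (finite_range fun i ↦ -f i).bddAbove i),
      le_ciSup (finite_range f).bddAbove i⟩
  · obtain ⟨i, hi⟩ := exists_eq_ciSup_of_finite (f := fun i ↦ -f i)
    obtain ⟨j, hj⟩ := exists_eq_ciSup_of_finite (f := f)
    rw [← hi, ← hj, neg_neg]
    exact Icc_subset_segment.trans
      (segment_subset_convexHull (mem_range_self i) (mem_range_self j))

variable {E : Type*} [NormedAddCommGroup E] [InnerProductSpace ℝ E]

theorem volume_image_inner_convexHull (a : ι → E) (g : E) :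
    volume (inner ℝ g '' convexHull ℝ (range a)) =
      ENNReal.ofReal ((⨆ i, ⟪a i, g⟫_ℝ) + ⨆ i, ⟪a i, -g⟫_ℝ) := by
  have himage := (innerSL ℝ g).toLinearMap.image_convexHull (range a)
  simp only [ContinuousLinearMap.coe_coe, coe_innerSL_apply, ← range_comp] at himage
  rw [himage, convexHull_range_eq_Icc, Real.volume_Icc, sub_neg_eq_add]
  simp only [Function.comp_apply, inner_neg_right, real_inner_comm g]

theorem lintegral_volume_image_inner_convexHull [FiniteDimensional ℝ E] [MeasurableSpace E]
    [BorelSpace E] (a : ι → E) :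
    ∫⁻ g, volume (inner ℝ g '' convexHull ℝ (range a)) ∂(stdGaussian E) =
      ENNReal.ofReal (2 * ∫ g, ⨆ i, ⟪a i, g⟫_ℝ ∂(stdGaussian E)) := by
  have hint := integrable_iSup_inner a
  have hint_neg : Integrable (fun g ↦ ⨆ i, ⟪a i, -g⟫_ℝ) (stdGaussian E) := by
    simpa using integrable_iSup_inner (-a)
  have hnonneg (g : E) : 0 ≤ (⨆ i, ⟪a i, g⟫_ℝ) + ⨆ i, ⟪a i, -g⟫_ℝ := by
    obtain ⟨i⟩ := ‹Nonempty ι›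
    calc 0 = ⟪a i, g⟫_ℝ + ⟪a i, -g⟫_ℝ := by rw [inner_neg_right, add_neg_cancel]
      _ ≤ _ := add_le_add (le_ciSup (f := fun i ↦ ⟪a i, g⟫_ℝ) (finite_range _).bddAbove i)
        (le_ciSup (f := fun i ↦ ⟪a i, -g⟫_ℝ) (finite_range _).bddAbove i)
  simp only [volume_image_inner_convexHull]
  rw [← ofReal_integral_eq_lintegral_ofReal (hint.fun_add hint_neg) (.of_forall hnonneg),
    integral_add hint hint_neg, integral_comp_neg_stdGaussian fun g ↦ ⨆ i, ⟪a i, g⟫_ℝ, two_mul]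

end ConvexHull

/-- If `|aᵢ - aⱼ| ≥ |bᵢ - bⱼ|` for all `i, j`, then the perimeter of the convex hull of the
`aᵢ` is at least the perimeter of the convex hull of the `bᵢ`. -/
theorem stmt2 {n : ℕ} (a b : Fin n → EuclideanSpace ℝ (Fin 2))
    (h : ∀ i j, dist (b i) (b j) ≤ dist (a i) (a j)) :
    planePerimeter (convexHull ℝ (Set.range b)) ≤ planePerimeter (convexHull ℝ (Set.range a)) := by
  cases isEmpty_or_nonempty (Fin n)
  · rw [Subsingleton.elim a b]
  have hperimeter (c : Fin n → EuclideanSpace ℝ (Fin 2)) :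
      ENNReal.ofReal √(2 / Real.pi) * planePerimeter (convexHull ℝ (range c)) =
        2 * ENNReal.ofReal (2 * ∫ g, ⨆ i, ⟪c i, g⟫_ℝ ∂(stdGaussian _)) := by
    rw [← lintegral_volume_image_inner_convexHull]
    exact ofReal_sqrt_mul_planePerimeter ((finite_range c).isCompact_convexHull ℝ)
      (convex_convexHull ℝ _) (range_nonempty c).convexHull
      ((finite_range c).subset extremePoints_convexHull_subset).countable
  have hpos : ENNReal.ofReal √(2 / Real.pi) ≠ 0 := by simp [Real.pi_pos]
  rw [← ENNReal.mul_le_mul_iff_right hpos ENNReal.ofReal_ne_top, hperimeter, hperimeter]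
  gcongr 2 * ENNReal.ofReal (2 * ?_)
  exact integral_iSup_inner_le a b h
end

section
/- Every triangle in ℝ² admits an acute triangulation: it can be subdivided into finitely many triangles, each of whose angles is strictly less than π/2, such that the triangles tile the original triangle and any two of them intersect in a common vertex, a common edge, or the empty set. -/
/-!
Some side of the triangle lies between two acute angles; take it as the base, so that the foot of
the altitude from the apex is interior to it. Cutting off a thin corner at each end of the base
leaves a convex pentagon with the apex among its vertices. The cuts are chosen so that coning the
pentagon from a point of the altitude slightly below the height of the cuts on the legs gives five
acute triangles; with the two corners this makes seven.

That the coned triangles tile a convex polygon is seen from the affine functions `ℓ i` vanishing on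
the `i`-th edge and equal to `1` at the cone point: a point of the polygon belongs to the triangle
over the edge where `ℓ i` is smallest, and `ℓ j - ℓ i` separates the triangles over the edges
`i` and `j`.
-/

open Set Complex

section MeetInFace

variable {ι ι' E F : Type*} [AddCommGroup E] [Module ℝ E] [AddCommGroup F] [Module ℝ F]

/-- Two simplices, given by their vertices, *meet in a common face*: their intersection is spanned
by vertices belonging to both. The common face may be empty, a vertex, an edge, and so on. -/
def MeetInFace (v : ι → E) (w : ι' → E) : Prop :=
  ∃ (s : Set ι) (s' : Set ι'), v '' s = w '' s' ∧
    convexHull ℝ (range v) ∩ convexHull ℝ (range w) = convexHull ℝ (v '' s)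

theorem MeetInFace.refl (v : ι → E) : MeetInFace v v :=
  ⟨univ, univ, rfl, by rw [inter_self, image_univ]⟩

theorem MeetInFace.symm {v : ι → E} {w : ι' → E} (h : MeetInFace v w) : MeetInFace w v := by
  obtain ⟨s, s', hs, hvw⟩ := h
  exact ⟨s', s, hs.symm, by rw [inter_comm, hvw, hs]⟩

theorem MeetInFace.map {v : ι → E} {w : ι' → E} (h : MeetInFace v w) {f : E →ᵃ[ℝ] F}
    (hf : Function.Injective f) : MeetInFace (f ∘ v) (f ∘ w) := by
  obtain ⟨s, s', hs, hvw⟩ := h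
  refine ⟨s, s', by rw [image_comp, image_comp, hs], ?_⟩
  rw [range_comp, range_comp, image_comp, ← f.image_convexHull, ← f.image_convexHull,
    ← f.image_convexHull, ← image_inter hf, hvw]

theorem nonneg_of_mem_convexHull {f : E →ᵃ[ℝ] ℝ} {s : Set E} (hs : ∀ x ∈ s, 0 ≤ f x) {x : E}
    (hx : x ∈ convexHull ℝ s) : 0 ≤ f x :=
  convexHull_min (t := f ⁻¹' Ici 0) hs ((convex_Ici 0).affine_preimage f) hx

theorem mem_convexHull_zeros {f : E →ᵃ[ℝ] ℝ} {s : Set E} (hs : ∀ x ∈ s, f x ≤ 0) {x : E}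
    (hx : x ∈ convexHull ℝ s) (hfx : 0 ≤ f x) : x ∈ convexHull ℝ {y ∈ s | f y = 0} := by
  set t := {y | f y ≤ 0 ∧ (f y = 0 → y ∈ convexHull ℝ {y ∈ s | f y = 0})}
  have hst : s ⊆ t := fun y hy ↦ ⟨hs y hy, fun h ↦ subset_convexHull ℝ _ ⟨hy, h⟩⟩
  have ht : Convex ℝ t := by
    rw [convex_iff_forall_pos]
    rintro y ⟨hy, hy'⟩ z ⟨hz, hz'⟩ a b ha hb hab
    have hf : f (a • y + b • z) = a * f y + b * f z := Convex.combo_affine_apply hab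
    refine ⟨?_, fun h ↦ ?_⟩ <;> rw [hf] at *
    · nlinarith
    · exact convex_convexHull ℝ _ (hy' (by nlinarith)) (hz' (by nlinarith)) ha.le hb.le hab
  obtain ⟨h, h'⟩ := convexHull_min hst ht hx
  exact h' (h.antisymm hfx)

theorem MeetInFace.of_separating {v : ι → E} {w : ι' → E} (f : E →ᵃ[ℝ] ℝ)
    (hv : ∀ i, 0 ≤ f (v i)) (hw : ∀ j, f (w j) ≤ 0) (h : ∀ j, f (w j) = 0 → w j ∈ range v) :
    MeetInFace v w := by
  have hzeros : w '' {j | f (w j) = 0} ⊆ range v := image_subset_iff.2 h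
  refine ⟨v ⁻¹' (w '' {j | f (w j) = 0}), _, image_preimage_eq_of_subset hzeros, ?_⟩
  rw [image_preimage_eq_of_subset hzeros]
  refine Subset.antisymm ?_ (subset_inter (convexHull_mono hzeros)
    (convexHull_mono (image_subset_range _ _)))
  rintro x ⟨hxv, hxw⟩
  refine convexHull_mono ?_ (mem_convexHull_zeros (forall_mem_range.2 hw) hxw
    (nonneg_of_mem_convexHull (forall_mem_range.2 hv) hxv))
  rintro _ ⟨⟨j, rfl⟩, hj⟩
  exact mem_image_of_mem w hj

theorem MeetInFace.cone {m n : ℕ} {c : E} {v : Fin m → E} {w : Fin n → E} {f g : E →ᵃ[ℝ] ℝ}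
    (hc : f c = g c) (hfv : ∀ i, f (v i) = 0) (hgw : ∀ j, g (w j) = 0) (hgv : ∀ i, 0 ≤ g (v i))
    (hfw : ∀ j, f (w j) = 0 ∧ w j ∈ range v ∨ 0 < f (w j)) :
    MeetInFace (Matrix.vecCons c v) (Matrix.vecCons c w) := by
  refine .of_separating (g - f) (Fin.cases ?_ fun i ↦ ?_) (Fin.cases ?_ fun j ↦ ?_)
    (Fin.cases ?_ fun j hj ↦ ?_)
  · simp [hc]
  · simpa [hfv] using hgv i
  · simp [hc]
  · rcases hfw j with ⟨h, -⟩ | h <;> simp [hgw, h, h.le]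
  · exact fun _ ↦ ⟨0, rfl⟩
  · rcases hfw j with ⟨-, i, hi⟩ | h
    · exact ⟨i.succ, by simpa using hi⟩
    · simp [hgw, h.ne'] at hj

end MeetInFace

section Plane

/-- Twice the signed area of the triangle `p q r`, as an affine function of `r`: it is positive
exactly when `r` lies to the left of the directed line from `p` to `q`. -/
noncomputable def orient (p q : ℂ) : ℂ →ᵃ[ℝ] ℝ where
  toFun r := (q.re - p.re) * (r.im - p.im) - (q.im - p.im) * (r.re - p.re)
  linear := (q.re - p.re) • imLm - (q.im - p.im) • reLm
  map_vadd' r v := by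
    simp only [vadd_eq_add, add_re, add_im, LinearMap.sub_apply, LinearMap.smul_apply, imLm_coe,
      reLm_coe, smul_eq_mul]
    ring

theorem orient_apply (p q r : ℂ) :
    orient p q r = (q.re - p.re) * (r.im - p.im) - (q.im - p.im) * (r.re - p.re) :=
  rfl

@[simp] theorem orient_self_left (p q : ℂ) : orient p q p = 0 := by
  simp [orient_apply]

@[simp] theorem orient_self_right (p q : ℂ) : orient p q q = 0 := by
  rw [orient_apply]; ring

theorem orient_swap (p q r : ℂ) : orient q p r = -orient p q r := by
  rw [orient_apply, orient_apply]; ring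

theorem orient_rotate (p q r : ℂ) : orient q r p = orient p q r := by
  rw [orient_apply, orient_apply]; ring

theorem orient_smul (p q r x : ℂ) :
    orient p q r • x = orient q r x • p + orient r p x • q + orient p q x • r := by
  apply Complex.ext <;> simp only [orient_apply, add_re, add_im, smul_re, smul_im, smul_eq_mul] <;>
    ring

theorem orient_add_orient_add_orient (p q r x : ℂ) :
    orient q r x + orient r p x + orient p q x = orient p q r := by
  simp only [orient_apply]; ring

theorem orient_mul_affineMap (f : ℂ →ᵃ[ℝ] ℝ) (p q r x : ℂ) :
    orient p q r * f x = orient q r x * f p + orient r p x * f q + orient p q x * f r := by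
  have hf (y : ℂ) : f y = f.linear y + f 0 := congrFun f.decomp y
  have hlin := congrArg f.linear (orient_smul p q r x)
  simp only [map_add, map_smul, smul_eq_mul] at hlin
  rw [hf x, hf p, hf q, hf r]
  linear_combination hlin - f 0 * orient_add_orient_add_orient p q r x

theorem convexHull_range_triangle {p q r : ℂ} (h : 0 < orient p q r) :
    convexHull ℝ (range ![p, q, r]) =
      {x | 0 ≤ orient p q x ∧ 0 ≤ orient q r x ∧ 0 ≤ orient r p x} := by
  refine Subset.antisymm (fun x hx ↦ ?_) ?_
  · have hqr : orient q r p = orient p q r := orient_rotate p q r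
    have hrp : orient r p q = orient p q r := (orient_rotate q r p).trans hqr
    refine ⟨?_, ?_, ?_⟩ <;> refine nonneg_of_mem_convexHull (forall_mem_range.2 ?_) hx <;>
      simp [Fin.forall_fin_succ, hqr, hrp, h.le]
  · rintro x ⟨hpq, hqr, hrp⟩
    have hx : x = (orient q r x / orient p q r) • p + (orient r p x / orient p q r) • q +
        (orient p q x / orient p q r) • r := by
      apply smul_right_injective ℂ h.ne'
      simp only [smul_add, smul_smul, mul_div_cancel₀ _ h.ne', orient_smul p q r x]
    have hsum : orient q r x / orient p q r + orient r p x / orient p q r +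
        orient p q x / orient p q r = 1 := by
      rw [← add_div, ← add_div, orient_add_orient_add_orient, div_self h.ne']
    have hmem (i) : ![p, q, r] i ∈ convexHull ℝ (range ![p, q, r]) :=
      subset_convexHull ℝ _ (mem_range_self i)
    have hw (i) : 0 ≤ ![orient q r x / orient p q r, orient r p x / orient p q r,
        orient p q x / orient p q r] i := by
      fin_cases i <;> exact div_nonneg ‹_› h.le
    have := (convex_convexHull ℝ _).sum_mem (t := Finset.univ) (fun i _ ↦ hw i)
      (by simpa [Fin.sum_univ_three] using hsum) fun i _ ↦ hmem i
    rw [hx]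
    rwa [Fin.sum_univ_three] at this

end Plane

section Fan

/-- A closed polygon in the plane, given by its cyclic list of vertices, is *strictly convex* (and
counterclockwise) if every vertex lies strictly to the left of every edge not containing it. -/
def IsConvexPolygon {n : ℕ} [NeZero n] (v : Fin n → ℂ) : Prop :=
  ∀ i k, k = i ∨ k = i + 1 ∨ 0 < orient (v i) (v (i + 1)) (v k)

/-- The triangles spanned by a point `c` and the edges of a polygon `v`. -/
def fan {n : ℕ} [NeZero n] (c : ℂ) (v : Fin n → ℂ) (i : Fin n) : Fin 3 → ℂ :=
  ![c, v i, v (i + 1)]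

/-- The affine function that vanishes on the line through the `i`-th edge of the polygon `v` and is
`1` at `c` (if `c` lies on that line, it is the zero function). -/
noncomputable def edgeCoord {n : ℕ} [NeZero n] (c : ℂ) (v : Fin n → ℂ) (i : Fin n) : ℂ →ᵃ[ℝ] ℝ :=
  (orient (v i) (v (i + 1)) c)⁻¹ • orient (v i) (v (i + 1))

variable {n : ℕ} [NeZero n] {c : ℂ} {v : Fin n → ℂ}

theorem edgeCoord_center {i : Fin n} (hc : 0 < orient (v i) (v (i + 1)) c) :
    edgeCoord c v i c = 1 :=
  inv_mul_cancel₀ hc.ne'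

theorem edgeCoord_left (i : Fin n) : edgeCoord c v i (v i) = 0 := by
  simp [edgeCoord]

theorem edgeCoord_right (i : Fin n) : edgeCoord c v i (v (i + 1)) = 0 := by
  simp [edgeCoord]

theorem edgeCoord_pos {i : Fin n} (hc : 0 < orient (v i) (v (i + 1)) c) {x : ℂ}
    (hx : 0 < orient (v i) (v (i + 1)) x) : 0 < edgeCoord c v i x :=
  mul_pos (inv_pos.2 hc) hx

theorem IsConvexPolygon.orient_nonneg (hv : IsConvexPolygon v) (i k : Fin n) :
    0 ≤ orient (v i) (v (i + 1)) (v k) := by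
  rcases hv i k with rfl | rfl | h
  · simp
  · simp
  · exact h.le

theorem IsConvexPolygon.edgeCoord_nonneg (hv : IsConvexPolygon v) {i : Fin n}
    (hc : 0 < orient (v i) (v (i + 1)) c) (k : Fin n) : 0 ≤ edgeCoord c v i (v k) :=
  mul_nonneg (inv_nonneg.2 hc.le) (hv.orient_nonneg i k)

theorem IsConvexPolygon.meetInFace_fan (hv : IsConvexPolygon v)
    (hc : ∀ i, 0 < orient (v i) (v (i + 1)) c) (i j : Fin n) :
    MeetInFace (fan c v i) (fan c v j) := by
  have edge_vanish (i : Fin n) (m : Fin 2) : edgeCoord c v i (![v i, v (i + 1)] m) = 0 := by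
    fin_cases m
    exacts [edgeCoord_left i, edgeCoord_right i]
  have vertex_cases (k : Fin n) : edgeCoord c v i (v k) = 0 ∧ v k ∈ range ![v i, v (i + 1)] ∨
      0 < edgeCoord c v i (v k) := by
    rcases hv i k with rfl | rfl | h
    · exact .inl ⟨edgeCoord_left _, 0, rfl⟩
    · exact .inl ⟨edgeCoord_right _, 1, rfl⟩
    · exact .inr (edgeCoord_pos (hc i) h)
  refine MeetInFace.cone (f := edgeCoord c v i) (g := edgeCoord c v j)
    (by rw [edgeCoord_center (hc i), edgeCoord_center (hc j)]) (edge_vanish i) (edge_vanish j)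
    ?_ ?_ <;> intro m <;> fin_cases m
  exacts [hv.edgeCoord_nonneg (hc j) _, hv.edgeCoord_nonneg (hc j) _, vertex_cases _,
    vertex_cases _]

theorem IsConvexPolygon.orient_pos_of_ne (hv : IsConvexPolygon v) {i k : Fin n} (h : k ≠ i)
    (h' : k ≠ i + 1) : 0 < orient (v i) (v (i + 1)) (v k) :=
  ((hv i k).resolve_left h).resolve_left h'

theorem add_one_ne_self_of_orient_pos {i : Fin n} (hc : 0 < orient (v i) (v (i + 1)) c) :
    i + 1 ≠ i := by
  intro h
  rw [h] at hc
  simp [orient_apply] at hc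

theorem add_one_add_one_ne_self_of_orient_pos (hc : ∀ i, 0 < orient (v i) (v (i + 1)) c)
    (i : Fin n) : i + 1 + 1 ≠ i := by
  intro h
  have hi := hc (i + 1)
  rw [h, orient_swap] at hi
  exact (hc i).not_gt (neg_pos.1 hi)

theorem IsConvexPolygon.mem_convexHull_fan (hv : IsConvexPolygon v)
    (hc : ∀ i, 0 < orient (v i) (v (i + 1)) c) {i : Fin n} {x : ℂ}
    (hx : 0 ≤ orient (v i) (v (i + 1)) x) (hmin : ∀ j, edgeCoord c v i x ≤ edgeCoord c v j x) :
    x ∈ convexHull ℝ (range (fan c v i)) := by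
  have hpos : 0 < orient c (v i) (v (i + 1)) := by rw [← orient_rotate]; exact hc i
  have hval (j) := orient_mul_affineMap (edgeCoord c v j - edgeCoord c v i) c (v i) (v (i + 1)) x
  simp only [AffineMap.coe_sub, Pi.sub_apply, edgeCoord_center (hc _), edgeCoord_left,
    edgeCoord_right, sub_self, sub_zero, mul_zero, zero_add] at hval
  have hne := add_one_ne_self_of_orient_pos (hc i)
  have hne' := add_one_add_one_ne_self_of_orient_pos hc i
  have hnext : 0 ≤ orient (v (i + 1)) c x := by
    have hi : 0 < edgeCoord c v (i + 1) (v i) :=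
      edgeCoord_pos (hc _) (hv.orient_pos_of_ne hne.symm hne'.symm)
    have h := hval (i + 1)
    rw [edgeCoord_left, mul_zero, add_zero] at h
    exact nonneg_of_mul_nonneg_left (h ▸ mul_nonneg hpos.le (sub_nonneg.2 (hmin _))) hi
  have hprev : 0 ≤ orient c (v i) x := by
    obtain ⟨k, rfl⟩ : ∃ k, i = k + 1 := ⟨i - 1, (sub_add_cancel i 1).symm⟩
    have hi : 0 < edgeCoord c v k (v (k + 1 + 1)) :=
      edgeCoord_pos (hc _) (hv.orient_pos_of_ne
        (add_one_add_one_ne_self_of_orient_pos hc k) hne)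
    have h := hval k
    rw [edgeCoord_right, mul_zero, zero_add] at h
    exact nonneg_of_mul_nonneg_left (h ▸ mul_nonneg hpos.le (sub_nonneg.2 (hmin _))) hi
  rw [fan, convexHull_range_triangle hpos]
  exact ⟨hprev, hx, hnext⟩

theorem IsConvexPolygon.iUnion_convexHull_fan (hv : IsConvexPolygon v)
    (hc : ∀ i, 0 < orient (v i) (v (i + 1)) c) :
    ⋃ i, convexHull ℝ (range (fan c v i)) = {x | ∀ i, 0 ≤ orient (v i) (v (i + 1)) x} := by
  refine Subset.antisymm (iUnion_subset fun j x hx i ↦ ?_) fun x hx ↦ mem_iUnion.2 ?_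
  · refine nonneg_of_mem_convexHull (forall_mem_range.2 fun k ↦ ?_) hx
    fin_cases k
    exacts [(hc i).le, hv.orient_nonneg i j, hv.orient_nonneg i (j + 1)]
  · obtain ⟨i, hi⟩ := Finite.exists_min fun i ↦ edgeCoord c v i x
    exact ⟨i, hv.mem_convexHull_fan hc (hx i) hi⟩

end Fan

section Ear

/-- The triangle with apex `d` erected on the `i`-th edge of the polygon `v`, on the outer side. -/
def ear {n : ℕ} [NeZero n] (d : ℂ) (v : Fin n → ℂ) (i : Fin n) : Fin 3 → ℂ :=
  ![d, v (i + 1), v i]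

variable {n : ℕ} [NeZero n] {d e : ℂ} {v : Fin n → ℂ}

theorem IsConvexPolygon.meetInFace_ear (hv : IsConvexPolygon v) {i : Fin n}
    (hd : orient (v i) (v (i + 1)) d ≤ 0) (he : 0 < orient (v i) (v (i + 1)) e) (j k : Fin n) :
    MeetInFace (ear d v i) ![e, v j, v k] := by
  have vertex_cases (l : Fin n) (hl : -orient (v i) (v (i + 1)) (v l) = 0) :
      v l ∈ range (ear d v i) := by
    rcases hv i l with rfl | rfl | h
    exacts [⟨2, rfl⟩, ⟨1, rfl⟩, absurd (neg_eq_zero.1 hl) h.ne']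
  refine MeetInFace.of_separating (-orient (v i) (v (i + 1))) ?_ ?_ ?_ <;> intro m <;> fin_cases m
  · simpa [ear] using hd
  · simp [ear]
  · simp [ear]
  · simpa using he.le
  · simpa using hv.orient_nonneg i j
  · simpa using hv.orient_nonneg i k
  · exact fun h ↦ absurd (neg_eq_zero.1 h) he.ne'
  · exact vertex_cases j
  · exact vertex_cases k

theorem IsConvexPolygon.meetInFace_ear_fan {c : ℂ} (hv : IsConvexPolygon v)
    (hc : ∀ i, 0 < orient (v i) (v (i + 1)) c) {i : Fin n}
    (hd : orient (v i) (v (i + 1)) d ≤ 0) (j : Fin n) :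
    MeetInFace (ear d v i) (fan c v j) :=
  hv.meetInFace_ear hd (hc i) j (j + 1)

end Ear

section Model

/-- The foot of the corner cut off at the base vertex `x` of the model triangle. -/
noncomputable def footPt (x s : ℝ) : ℂ := ⟨x * s / 2, 0⟩

/-- The point at height `1 - s` on the leg from the base vertex `x` to the apex `I` of the model
triangle. -/
noncomputable def legPt (x s : ℝ) : ℂ := ⟨x * s, 1 - s⟩

/-- What remains of the model triangle with vertices `-a`, `b` and `I` when the two base corners are
cut off. -/
noncomputable def pentagon (a b s : ℝ) : Fin 5 → ℂ :=
  ![footPt (-a) s, footPt b s, legPt b s, I, legPt (-a) s]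

/-- The pentagon coned from `t * I`, together with the two base corners. -/
noncomputable def modelTriangulation (a b s t : ℝ) : Fin 5 ⊕ Fin 2 → Fin 3 → ℂ :=
  Sum.elim (fan ⟨0, t⟩ (pentagon a b s))
    ![ear ⟨-a, 0⟩ (pentagon a b s) 4, ear ⟨b, 0⟩ (pentagon a b s) 1]

variable {a b s t : ℝ}

/-- The left-hand sides of the inequalities `0 ≤ edgeForm a b s z i` that cut out the pentagon. -/
noncomputable def edgeForm (a b s : ℝ) (z : ℂ) : Fin 5 → ℝ :=
  ![(a + b) * s / 2 * z.im, b * s / 2 * (z.im + 1 - s) - (1 - s) * z.re,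
    s * (b * (1 - z.im) - z.re), s * (z.re + a * (1 - z.im)),
    a * s / 2 * (z.im + 1 - s) + (1 - s) * z.re]

theorem orient_pentagon (z : ℂ) (i : Fin 5) :
    orient (pentagon a b s i) (pentagon a b s (i + 1)) z = edgeForm a b s z i := by
  fin_cases i <;>
    simp only [pentagon, edgeForm, orient_apply, footPt, legPt, Fin.isValue, Fin.zero_eta,
      Fin.mk_one, Fin.reduceFinMk, Fin.reduceAdd, zero_add, Matrix.cons_val, I_re, I_im] <;>
    ring

theorem isConvexPolygon_pentagon (ha : 0 < a) (hb : 0 < b) (hs : 0 < s) (hs1 : s < 1) :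
    IsConvexPolygon (pentagon a b s) := by
  have hr := sub_pos.2 hs1
  have has := mul_pos ha hs
  have hbs := mul_pos hb hs
  intro i k
  rw [orient_pentagon]
  fin_cases i <;> fin_cases k <;>
    first | exact .inl rfl | exact .inr (.inl rfl) | refine .inr (.inr ?_)
  all_goals
    simp only [pentagon, edgeForm, footPt, legPt, Fin.isValue, Fin.zero_eta, Fin.mk_one,
      Fin.reduceFinMk, Matrix.cons_val, I_re, I_im]
    nlinarith [mul_pos has hr, mul_pos hbs hr, mul_pos has hs, mul_pos hbs hs]

theorem orient_pentagon_center_pos (ha : 0 < a) (hb : 0 < b) (hs : 0 < s) (hs1 : s < 1)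
    (ht : 0 < t) (ht1 : t < 1) (i : Fin 5) :
    0 < orient (pentagon a b s i) (pentagon a b s (i + 1)) ⟨0, t⟩ := by
  have hr : 0 < t + 1 - s := by linarith
  rw [orient_pentagon]
  fin_cases i <;>
    simp only [edgeForm, Fin.isValue, Fin.zero_eta, Fin.mk_one, Fin.reduceFinMk, Matrix.cons_val,
      mul_zero, add_zero, zero_add, sub_zero] <;>
    positivity

theorem mem_convexHull_model_iff (ha : 0 < a) (hb : 0 < b) {z : ℂ} :
    z ∈ convexHull ℝ {⟨-a, 0⟩, ⟨b, 0⟩, I} ↔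
      0 ≤ z.im ∧ 0 ≤ b * (1 - z.im) - z.re ∧ 0 ≤ z.re + a * (1 - z.im) := by
  have base : orient ⟨-a, 0⟩ ⟨b, 0⟩ z = (a + b) * z.im := by
    simp only [orient_apply]; ring
  have right : orient ⟨b, 0⟩ I z = b * (1 - z.im) - z.re := by
    simp only [orient_apply, I_re, I_im]; ring
  have left : orient I ⟨-a, 0⟩ z = z.re + a * (1 - z.im) := by
    simp only [orient_apply, I_re, I_im]; ring
  have hpos : 0 < orient ⟨-a, 0⟩ ⟨b, 0⟩ I := by
    rw [orient_apply]; simpa using add_pos hb ha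
  have hrange : ({⟨-a, 0⟩, ⟨b, 0⟩, I} : Set ℂ) = range ![⟨-a, 0⟩, ⟨b, 0⟩, I] := by
    rw [Matrix.range_cons, Matrix.range_cons_cons_empty, singleton_union]
  rw [hrange, convexHull_range_triangle hpos, mem_ofPred_eq, base, right, left,
    mul_nonneg_iff_of_pos_left (add_pos ha hb)]

theorem mem_convexHull_left_ear_iff (ha : 0 < a) (hs1 : s < 1) {z : ℂ} :
    z ∈ convexHull ℝ (range (ear ⟨-a, 0⟩ (pentagon a b s) 4)) ↔
      0 ≤ z.im ∧ a * s / 2 * (z.im + 1 - s) + (1 - s) * z.re ≤ 0 ∧ 0 ≤ z.re + a * (1 - z.im) := by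
  have hear : ear ⟨-a, 0⟩ (pentagon a b s) 4 = ![⟨-a, 0⟩, footPt (-a) s, legPt (-a) s] := rfl
  have base (z : ℂ) : orient ⟨-a, 0⟩ (footPt (-a) s) z = a * (1 - s / 2) * z.im := by
    simp only [orient_apply, footPt]; ring
  have cut : orient (footPt (-a) s) (legPt (-a) s) z =
      -(a * s / 2 * (z.im + 1 - s) + (1 - s) * z.re) := by
    simp only [orient_apply, footPt, legPt]; ring
  have leg : orient (legPt (-a) s) ⟨-a, 0⟩ z = (1 - s) * (z.re + a * (1 - z.im)) := by
    simp only [orient_apply, legPt]; ring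
  have hbase : 0 < a * (1 - s / 2) := mul_pos ha (by linarith)
  have hpos : 0 < orient ⟨-a, 0⟩ (footPt (-a) s) (legPt (-a) s) := by
    rw [base]; exact mul_pos hbase (sub_pos.2 hs1)
  rw [hear, convexHull_range_triangle hpos, mem_ofPred_eq, base, cut, leg,
    neg_nonneg, mul_nonneg_iff_of_pos_left hbase, mul_nonneg_iff_of_pos_left (sub_pos.2 hs1)]

theorem mem_convexHull_right_ear_iff (hb : 0 < b) (hs1 : s < 1) {z : ℂ} :
    z ∈ convexHull ℝ (range (ear ⟨b, 0⟩ (pentagon a b s) 1)) ↔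
      0 ≤ z.im ∧ b * s / 2 * (z.im + 1 - s) - (1 - s) * z.re ≤ 0 ∧ 0 ≤ b * (1 - z.im) - z.re := by
  have hear : ear ⟨b, 0⟩ (pentagon a b s) 1 = ![⟨b, 0⟩, legPt b s, footPt b s] := rfl
  have base (z : ℂ) : orient (footPt b s) ⟨b, 0⟩ z = b * (1 - s / 2) * z.im := by
    simp only [orient_apply, footPt]; ring
  have cut : orient (legPt b s) (footPt b s) z =
      -(b * s / 2 * (z.im + 1 - s) - (1 - s) * z.re) := by
    simp only [orient_apply, footPt, legPt]; ring
  have leg : orient ⟨b, 0⟩ (legPt b s) z = (1 - s) * (b * (1 - z.im) - z.re) := by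
    simp only [orient_apply, legPt]; ring
  have hbase : 0 < b * (1 - s / 2) := mul_pos hb (by linarith)
  have hpos : 0 < orient ⟨b, 0⟩ (legPt b s) (footPt b s) := by
    rw [orient_rotate (footPt b s), base]; exact mul_pos hbase (sub_pos.2 hs1)
  rw [hear, convexHull_range_triangle hpos, mem_ofPred_eq, base, cut, leg,
    neg_nonneg, mul_nonneg_iff_of_pos_left hbase, mul_nonneg_iff_of_pos_left (sub_pos.2 hs1)]
  tauto

theorem forall_orient_pentagon_nonneg_iff (ha : 0 < a) (hb : 0 < b) (hs : 0 < s) {z : ℂ} :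
    (∀ i, 0 ≤ orient (pentagon a b s i) (pentagon a b s (i + 1)) z) ↔
      z ∈ convexHull ℝ {⟨-a, 0⟩, ⟨b, 0⟩, I} ∧ 0 ≤ b * s / 2 * (z.im + 1 - s) - (1 - s) * z.re ∧
        0 ≤ a * s / 2 * (z.im + 1 - s) + (1 - s) * z.re := by
  have hab : 0 < (a + b) * s / 2 := by positivity
  simp only [orient_pentagon, edgeForm, Fin.forall_fin_succ, Fin.isValue, Matrix.cons_val_zero,
    Matrix.cons_val_succ, mul_nonneg_iff_of_pos_left hab, mul_nonneg_iff_of_pos_left hs,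
    IsEmpty.forall_iff, and_true, mem_convexHull_model_iff ha hb]
  tauto

theorem iUnion_convexHull_modelTriangulation (ha : 0 < a) (hb : 0 < b) (hs : 0 < s) (hs1 : s < 1)
    (ht : 0 < t) (ht1 : t < 1) :
    ⋃ i, convexHull ℝ (range (modelTriangulation a b s t i)) =
      convexHull ℝ {⟨-a, 0⟩, ⟨b, 0⟩, I} := by
  have hfan := (isConvexPolygon_pentagon ha hb hs hs1).iUnion_convexHull_fan
    (orient_pentagon_center_pos ha hb hs hs1 ht ht1)
  have hsplit : ⋃ i, convexHull ℝ (range (modelTriangulation a b s t i)) =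
      (⋃ i, convexHull ℝ (range (fan ⟨0, t⟩ (pentagon a b s) i))) ∪
        (convexHull ℝ (range (ear ⟨-a, 0⟩ (pentagon a b s) 4)) ∪
          convexHull ℝ (range (ear ⟨b, 0⟩ (pentagon a b s) 1))) := by
    rw [iUnion_sum]
    congr 1
    ext z
    simp [modelTriangulation, Fin.exists_fin_two]
  ext z
  rw [hsplit, hfan, mem_union, mem_union, mem_ofPred_eq, forall_orient_pentagon_nonneg_iff ha hb hs,
    mem_convexHull_left_ear_iff ha hs1, mem_convexHull_right_ear_iff hb hs1,
    mem_convexHull_model_iff ha hb]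
  constructor
  · rintro (⟨h, -⟩ | ⟨hy, hcut, hleg⟩ | ⟨hy, hcut, hleg⟩)
    · exact h
    · have hcut' : 0 ≤ a * s / 2 * (z.im + 1 - s) := mul_nonneg (by positivity) (by linarith)
      have hre : z.re ≤ 0 := by nlinarith
      have him : 0 ≤ 1 - z.im := by nlinarith
      exact ⟨hy, by linarith [mul_nonneg hb.le him], hleg⟩
    · have hcut' : 0 ≤ b * s / 2 * (z.im + 1 - s) := mul_nonneg (by positivity) (by linarith)
      have hre : 0 ≤ z.re := by nlinarith
      have him : 0 ≤ 1 - z.im := by nlinarith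
      exact ⟨hy, hleg, by linarith [mul_nonneg ha.le him]⟩
  · rintro ⟨hy, hright, hleft⟩
    rcases le_total (a * s / 2 * (z.im + 1 - s) + (1 - s) * z.re) 0 with hP | hP
    · exact .inr (.inl ⟨hy, hP, hleft⟩)
    rcases le_total (b * s / 2 * (z.im + 1 - s) - (1 - s) * z.re) 0 with hQ | hQ
    · exact .inr (.inr ⟨hy, hQ, hright⟩)
    · exact .inl ⟨⟨hy, hright, hleft⟩, hQ, hP⟩

theorem orient_pentagon_left_cut (a b s x : ℝ) :
    orient (pentagon a b s 4) (pentagon a b s (4 + 1)) ⟨x, 0⟩ = (a * s / 2 + x) * (1 - s) := by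
  simp only [orient_pentagon, edgeForm, Matrix.cons_val]
  ring

theorem orient_pentagon_right_cut (a b s x : ℝ) :
    orient (pentagon a b s 1) (pentagon a b s (1 + 1)) ⟨x, 0⟩ = (b * s / 2 - x) * (1 - s) := by
  simp only [orient_pentagon, edgeForm, Matrix.cons_val]
  ring

theorem meetInFace_modelTriangulation (ha : 0 < a) (hb : 0 < b) (hs : 0 < s) (hs1 : s < 1)
    (ht : 0 < t) (ht1 : t < 1) (i j : Fin 5 ⊕ Fin 2) :
    MeetInFace (modelTriangulation a b s t i) (modelTriangulation a b s t j) := by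
  have hv := isConvexPolygon_pentagon ha hb hs hs1
  have hc := orient_pentagon_center_pos ha hb hs hs1 ht ht1
  have hr := sub_pos.2 hs1
  have hleft : orient (pentagon a b s 4) (pentagon a b s (4 + 1)) ⟨-a, 0⟩ ≤ 0 := by
    rw [orient_pentagon_left_cut]
    exact mul_nonpos_of_nonpos_of_nonneg (by nlinarith) hr.le
  have hright : orient (pentagon a b s 1) (pentagon a b s (1 + 1)) ⟨b, 0⟩ ≤ 0 := by
    rw [orient_pentagon_right_cut]
    exact mul_nonpos_of_nonpos_of_nonneg (by nlinarith) hr.le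
  have hleft_right : 0 < orient (pentagon a b s 4) (pentagon a b s (4 + 1)) ⟨b, 0⟩ := by
    rw [orient_pentagon_left_cut]
    positivity
  have hears : MeetInFace (ear ⟨-a, 0⟩ (pentagon a b s) 4) (ear ⟨b, 0⟩ (pentagon a b s) 1) :=
    hv.meetInFace_ear hleft hleft_right (1 + 1) 1
  have hear_fan (k : Fin 2) (l : Fin 5) :
      MeetInFace (modelTriangulation a b s t (.inr k)) (fan ⟨0, t⟩ (pentagon a b s) l) := by
    fin_cases k
    exacts [hv.meetInFace_ear_fan hc hleft l, hv.meetInFace_ear_fan hc hright l]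
  rcases i with i | i <;> rcases j with j | j
  · exact hv.meetInFace_fan hc i j
  · exact (hear_fan j i).symm
  · exact hear_fan i j
  · fin_cases i <;> fin_cases j
    exacts [.refl _, hears, hears.symm, .refl _]

end Model

section Acute

open EuclideanGeometry

variable {E F : Type*} [NormedAddCommGroup E] [InnerProductSpace ℝ E] [NormedAddCommGroup F]
  [InnerProductSpace ℝ F]

theorem angle_lt_pi_div_two_iff_inner_pos {p q r : E} :
    ∠ p q r < Real.pi / 2 ↔ 0 < inner ℝ (p - q) (r - q) := by
  rw [EuclideanGeometry.angle, InnerProductGeometry.angle, Real.arccos_lt_pi_div_two,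
    vsub_eq_sub, vsub_eq_sub]
  refine ⟨fun h ↦ ?_, fun h ↦ div_pos h (mul_pos ?_ ?_)⟩
  · by_contra! h'
    exact h.not_ge (div_nonpos_of_nonpos_of_nonneg h' (by positivity))
  · exact norm_pos_iff.2 fun h' ↦ by simp [h'] at h
  · exact norm_pos_iff.2 fun h' ↦ by simp [h'] at h

theorem pi_div_two_le_angle_of_wbtw {p q r : E} (h : Wbtw ℝ p q r) : Real.pi / 2 ≤ ∠ p q r := by
  rcases eq_or_ne q p with rfl | hqp
  · rw [angle_self_left]
  rcases eq_or_ne q r with rfl | hqr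
  · rw [angle_self_right]
  rw [Sbtw.angle₁₂₃_eq_pi ⟨h, hqp, hqr⟩]
  linarith [Real.pi_pos]

theorem angle_lt_pi_div_two_of_pi_div_two_le {p q r : E} (hpq : p ≠ q)
    (h : Real.pi / 2 ≤ ∠ q p r) : ∠ p q r < Real.pi / 2 := by
  rw [← not_lt, angle_lt_pi_div_two_iff_inner_pos, not_lt] at h
  have hsq : 0 < inner ℝ (p - q) (p - q) := real_inner_self_pos.2 (sub_ne_zero.2 hpq)
  have hsum : inner ℝ (p - q) (r - q) = inner ℝ (p - q) (p - q) - inner ℝ (q - p) (r - p) := by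
    rw [← neg_sub q p, ← sub_add_sub_cancel r p q, ← neg_sub q p]
    simp only [inner_neg_left, inner_add_right, inner_neg_right]
    ring
  rw [angle_lt_pi_div_two_iff_inner_pos]
  linarith

/-- All angles of the triangle with vertices `v` are acute. This is
`Affine.Simplex.AcuteAngled` for an unbundled, possibly degenerate triangle. -/
def IsAcute (v : Fin 3 → E) : Prop :=
  ∀ i j k, i ≠ j → j ≠ k → i ≠ k → ∠ (v i) (v j) (v k) < Real.pi / 2

theorem isAcute_of_inner_pos {p q r : E} (hp : 0 < inner ℝ (q - p) (r - p))
    (hq : 0 < inner ℝ (p - q) (r - q)) (hr : 0 < inner ℝ (p - r) (q - r)) :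
    IsAcute ![p, q, r] := by
  rw [← angle_lt_pi_div_two_iff_inner_pos] at hp hq hr
  intro i j k hij hjk hik
  fin_cases i <;> fin_cases j <;> fin_cases k <;>
    first | contradiction | assumption | (rw [angle_comm]; assumption)

theorem IsAcute.swap {p q r : E} (h : IsAcute ![p, q, r]) : IsAcute ![p, r, q] := by
  have hswap : ![p, r, q] = ![p, q, r] ∘ Equiv.swap 1 2 := by
    ext i; fin_cases i <;> rfl
  intro i j k hij hjk hik
  rw [hswap]
  exact h _ _ _ (by simpa) (by simpa) (by simpa)

theorem IsAcute.affineIndependent {v : Fin 3 → E} (h : IsAcute v) : AffineIndependent ℝ v := by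
  have hv : ![v 0, v 1, v 2] = v := by ext i; fin_cases i <;> rfl
  have not_wbtw {i j k} (hij : i ≠ j) (hjk : j ≠ k) (hik : i ≠ k) : ¬Wbtw ℝ (v i) (v j) (v k) :=
    fun hw ↦ (h i j k hij hjk hik).not_ge (pi_div_two_le_angle_of_wbtw hw)
  rw [← hv, affineIndependent_iff_not_collinear_set]
  intro hcol
  rcases hcol.wbtw_or_wbtw_or_wbtw with hw | hw | hw <;>
    exact not_wbtw (by decide) (by decide) (by decide) hw

theorem IsAcute.map {v : Fin 3 → E} (h : IsAcute v) {g : E →L[ℝ] F} (hg : IsConformalMap g)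
    (c : F) : IsAcute fun i ↦ c + g (v i) := by
  intro i j k hij hjk hik
  have hangle := h i j k hij hjk hik
  rw [EuclideanGeometry.angle, vsub_eq_sub, vsub_eq_sub] at hangle ⊢
  rwa [add_sub_add_left_eq_sub, add_sub_add_left_eq_sub, ← map_sub, ← map_sub,
    InnerProductGeometry.IsConformalMap.preserves_angle hg]

end Acute

section AcuteModel

theorem inner_sub_sub (p q r : ℂ) : inner ℝ (p - q) (r - q) =
    (p.re - q.re) * (r.re - q.re) + (p.im - q.im) * (r.im - q.im) := by
  simp only [Complex.inner, map_sub, mul_re, sub_re, conj_re, sub_im, conj_im]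
  ring

/-- The constraints on the cut parameter `s` of the model triangle and on the parameter `k`, which
determines the height `centerHeight s k` of the cone point, making the triangles next to the leg
ending in the base vertex `x` acute. -/
structure Admissible (x s k : ℝ) : Prop where
  s_pos : 0 < s
  s_le : s ≤ 1 / 3
  k_pos : 0 < k
  two_mul_k_le : 2 * k ≤ x ^ 2
  sq_mul_le : x ^ 2 * s ≤ 1

/-- The height of the cone point in the model triangle: below the cut, at height `1 - s`, by a
second-order term. -/
def centerHeight (s k : ℝ) : ℝ := 1 - s - k * s ^ 2

theorem exists_admissible {a b : ℝ} (ha : 0 < a) (hb : 0 < b) :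
    ∃ s k, Admissible a s k ∧ Admissible b s k := by
  have hden : 0 < 3 + a ^ 2 + b ^ 2 := by positivity
  have hs : 0 < 1 / (3 + a ^ 2 + b ^ 2) := by positivity
  have hs3 : 1 / (3 + a ^ 2 + b ^ 2) ≤ 1 / 3 := by gcongr; nlinarith [sq_nonneg a, sq_nonneg b]
  have hk : 0 < min (a ^ 2) (b ^ 2) / 2 := by positivity
  refine ⟨1 / (3 + a ^ 2 + b ^ 2), min (a ^ 2) (b ^ 2) / 2, ⟨hs, hs3, hk, ?_, ?_⟩,
    ⟨hs, hs3, hk, ?_, ?_⟩⟩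
  · linarith [min_le_left (a ^ 2) (b ^ 2)]
  · rw [mul_one_div, div_le_one hden]; nlinarith
  · linarith [min_le_right (a ^ 2) (b ^ 2)]
  · rw [mul_one_div, div_le_one hden]; nlinarith

namespace Admissible

variable {a b x s k : ℝ}

protected theorem neg (h : Admissible x s k) : Admissible (-x) s k :=
  ⟨h.s_pos, h.s_le, h.k_pos, by simpa using h.two_mul_k_le, by simpa using h.sq_mul_le⟩

theorem sq_pos (h : Admissible x s k) : 0 < x ^ 2 :=
  (mul_pos two_pos h.k_pos).trans_le h.two_mul_k_le

theorem k_mul_sq_le (h : Admissible x s k) : k * s ^ 2 ≤ s / 2 := by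
  nlinarith [h.two_mul_k_le, h.sq_mul_le, h.s_pos]

theorem half_le_centerHeight (h : Admissible x s k) : 1 / 2 ≤ centerHeight s k := by
  unfold centerHeight
  linarith [h.k_mul_sq_le, h.s_le]

theorem centerHeight_lt (h : Admissible x s k) : centerHeight s k < 1 - s := by
  unfold centerHeight
  linarith [mul_pos h.k_pos (pow_pos h.s_pos 2)]

theorem centerHeight_lt_one (h : Admissible x s k) : centerHeight s k < 1 := by
  linarith [h.centerHeight_lt, h.s_pos]

theorem isAcute_corner (h : Admissible x s k) : IsAcute ![⟨x, 0⟩, footPt x s, legPt x s] := by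
  have hs := h.s_pos
  have hx := h.sq_pos
  have hr : 0 < 1 - s := by linarith [h.s_le]
  have hr' : 0 < 1 - s / 2 := by linarith
  have hd : 0 < 1 - s - x ^ 2 * s / 2 := by linarith [h.s_le, h.sq_mul_le]
  apply isAcute_of_inner_pos <;> rw [inner_sub_sub]
  · calc 0 < x ^ 2 * (1 - s / 2) * (1 - s) := by positivity
      _ = _ := by simp only [footPt, legPt]; ring
  · calc 0 < x ^ 2 * s * (1 - s / 2) / 2 := by positivity
      _ = _ := by simp only [footPt, legPt]; ring
  · calc 0 < (1 - s) * (1 - s - x ^ 2 * s / 2) := by positivity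
      _ = _ := by simp only [footPt, legPt]; ring

theorem isAcute_side (h : Admissible x s k) :
    IsAcute ![⟨0, centerHeight s k⟩, footPt x s, legPt x s] := by
  have hs := h.s_pos
  have hk := h.k_pos
  have hr : 0 < 1 - s := by linarith [h.s_le]
  have ht := h.half_le_centerHeight
  apply isAcute_of_inner_pos <;> rw [inner_sub_sub]
  · have hkt : 0 < x ^ 2 / 2 - k * centerHeight s k := by
      nlinarith [h.two_mul_k_le, h.centerHeight_lt_one]
    calc 0 < s ^ 2 * (x ^ 2 / 2 - k * centerHeight s k) := by positivity
      _ = _ := by simp only [footPt, legPt, centerHeight]; ring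
  · have hxs : x ^ 2 * s ^ 2 / 4 < centerHeight s k * (1 - s) := by
      nlinarith [h.sq_mul_le, h.s_le]
    calc 0 < centerHeight s k * (1 - s) - x ^ 2 * s ^ 2 / 4 := sub_pos.2 hxs
      _ = _ := by simp only [footPt, legPt]; ring
  · calc 0 < x ^ 2 * s ^ 2 / 2 + k * s ^ 2 * (1 - s) := by positivity
      _ = _ := by simp only [footPt, legPt, centerHeight]; ring

theorem isAcute_top (h : Admissible x s k) :
    IsAcute ![⟨0, centerHeight s k⟩, I, legPt x s] := by
  have hs := h.s_pos
  have ht : 0 < 1 - centerHeight s k := sub_pos.2 h.centerHeight_lt_one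
  apply isAcute_of_inner_pos <;> rw [inner_sub_sub]
  · calc 0 < (1 - centerHeight s k) * (1 - s - centerHeight s k) :=
        mul_pos ht (sub_pos.2 h.centerHeight_lt)
      _ = _ := by simp only [legPt, I_re, I_im]; ring
  · calc 0 < (1 - centerHeight s k) * s := by positivity
      _ = _ := by simp only [legPt, I_re, I_im]; ring
  · have hks : 0 < x ^ 2 - k * s := by
      nlinarith [h.two_mul_k_le, h.s_le, h.k_pos]
    calc 0 < s ^ 2 * (x ^ 2 - k * s) := by positivity
      _ = _ := by simp only [legPt, centerHeight, I_re, I_im]; ring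

theorem isAcute_bottom (ha : 0 < a) (hb : 0 < b) (h : Admissible a s k) (h' : Admissible b s k) :
    IsAcute ![⟨0, centerHeight s k⟩, footPt (-a) s, footPt b s] := by
  have hs := h.s_pos
  have ht := h.half_le_centerHeight
  apply isAcute_of_inner_pos <;> rw [inner_sub_sub]
  · have hab : a * b * s ^ 2 / 4 < centerHeight s k ^ 2 := by
      nlinarith [h.sq_mul_le, h'.sq_mul_le, h.s_le, sq_nonneg (a - b)]
    calc 0 < centerHeight s k ^ 2 - a * b * s ^ 2 / 4 := sub_pos.2 hab
      _ = _ := by simp only [footPt]; ring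
  · calc 0 < a * (a + b) * s ^ 2 / 4 := by positivity
      _ = _ := by simp only [footPt]; ring
  · calc 0 < b * (a + b) * s ^ 2 / 4 := by positivity
      _ = _ := by simp only [footPt]; ring

theorem isAcute_modelTriangulation (ha : 0 < a) (hb : 0 < b) (h : Admissible a s k)
    (h' : Admissible b s k) (i : Fin 5 ⊕ Fin 2) :
    IsAcute (modelTriangulation a b s (centerHeight s k) i) := by
  rcases i with i | i <;> fin_cases i
  exacts [isAcute_bottom ha hb h h', h'.isAcute_side, h'.isAcute_top.swap, h.neg.isAcute_top,
    h.neg.isAcute_side.swap, h.neg.isAcute_corner, h'.isAcute_corner.swap]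

end Admissible

end AcuteModel

section Triangulation

variable {ι ι' E F : Type*} [NormedAddCommGroup E] [InnerProductSpace ℝ E] [NormedAddCommGroup F]
  [InnerProductSpace ℝ F]

/-- The triangles with vertices `V i` form an acute triangulation of the set `K`. Nondegeneracy of
the triangles is not a field, because a triangle with a zero or straight angle, or with coinciding
vertices (where Mathlib's angle is `π / 2` by convention), is never acute. -/
structure IsAcuteTriangulation (V : ι → Fin 3 → E) (K : Set E) : Prop where
  iUnion_convexHull : ⋃ i, convexHull ℝ (range (V i)) = K
  meetInFace : ∀ i j, MeetInFace (V i) (V j)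
  acute : ∀ i, IsAcute (V i)

theorem IsAcuteTriangulation.comp_equiv {V : ι → Fin 3 → E} {K : Set E}
    (h : IsAcuteTriangulation V K) (e : ι' ≃ ι) : IsAcuteTriangulation (V ∘ e) K where
  iUnion_convexHull := by
    rw [← h.iUnion_convexHull]
    exact e.surjective.iUnion_comp fun i ↦ convexHull ℝ (range (V i))
  meetInFace i j := h.meetInFace (e i) (e j)
  acute i := h.acute (e i)

theorem IsAcuteTriangulation.map {V : ι → Fin 3 → E} {S : Set E}
    (h : IsAcuteTriangulation V (convexHull ℝ S)) {g : E →L[ℝ] F} (hg : IsConformalMap g) (c : F) :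
    IsAcuteTriangulation (fun i m ↦ c + g (V i m)) (convexHull ℝ ((fun x ↦ c + g x) '' S)) := by
  let f : E →ᵃ[ℝ] F := AffineMap.const ℝ E c + g.toLinearMap.toAffineMap
  have hf : Function.Injective f := (add_right_injective c).comp hg.injective
  have himage (s : Set E) : f '' convexHull ℝ s = convexHull ℝ ((fun x ↦ c + g x) '' s) :=
    f.image_convexHull s
  refine ⟨?_, fun i j ↦ (h.meetInFace i j).map hf, fun i ↦ (h.acute i).map hg c⟩
  rw [← himage, ← h.iUnion_convexHull, image_iUnion]
  exact iUnion_congr fun i ↦ by rw [himage, ← range_comp]; rfl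

theorem exists_isAcuteTriangulation_model {a b : ℝ} (ha : 0 < a) (hb : 0 < b) :
    ∃ V : Fin 7 → Fin 3 → ℂ, IsAcuteTriangulation V (convexHull ℝ {⟨-a, 0⟩, ⟨b, 0⟩, I}) := by
  obtain ⟨s, k, hsk, hsk'⟩ := exists_admissible ha hb
  have hs1 : s < 1 := by linarith [hsk.s_le]
  have ht : 0 < centerHeight s k := by linarith [hsk.half_le_centerHeight]
  have hmodel : IsAcuteTriangulation (modelTriangulation a b s (centerHeight s k))
      (convexHull ℝ {⟨-a, 0⟩, ⟨b, 0⟩, I}) :=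
    ⟨iUnion_convexHull_modelTriangulation ha hb hsk.s_pos hs1 ht hsk.centerHeight_lt_one,
      meetInFace_modelTriangulation ha hb hsk.s_pos hs1 ht hsk.centerHeight_lt_one,
      Admissible.isAcute_modelTriangulation ha hb hsk hsk'⟩
  exact ⟨_, hmodel.comp_equiv finSumFinEquiv.symm⟩

theorem isConformalMap_smulRight_add_smulRight {u v : E} (huv : inner ℝ u v = 0)
    (hnorm : ‖u‖ = ‖v‖) (hv : v ≠ 0) :
    IsConformalMap (reCLM.smulRight u + imCLM.smulRight v) := by
  refine (isConformalMap_iff _).2 ⟨‖v‖ ^ 2, by positivity, fun z w ↦ ?_⟩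
  have hvu : inner ℝ v u = 0 := by rw [real_inner_comm, huv]
  simp only [add_apply, ContinuousLinearMap.smulRight_apply, reCLM_apply, imCLM_apply,
    inner_add_left, inner_add_right, real_inner_smul_left, real_inner_smul_right,
    real_inner_self_eq_norm_sq, huv, hvu, hnorm, Complex.inner, mul_re, conj_re, conj_im]
  ring

open EuclideanGeometry

theorem exists_altitude_foot {A B C : E} (hA : ∠ B A C < Real.pi / 2)
    (hB : ∠ A B C < Real.pi / 2) :
    ∃ l : ℝ, 0 < l ∧ l < 1 ∧ inner ℝ (B - A) (C - AffineMap.lineMap A B l) = 0 := by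
  rw [angle_lt_pi_div_two_iff_inner_pos] at hA hB
  have hAB : B - A ≠ 0 := fun h ↦ by simp [h] at hA
  have hsq : 0 < inner ℝ (B - A) (B - A) := real_inner_self_pos.2 hAB
  have hsum : inner ℝ (A - B) (C - B) =
      inner ℝ (B - A) (B - A) - inner ℝ (B - A) (C - A) := by
    rw [← neg_sub B A, ← sub_sub_sub_cancel_right C B A, inner_neg_left, inner_sub_right, neg_sub]
  refine ⟨inner ℝ (B - A) (C - A) / inner ℝ (B - A) (B - A), div_pos hA hsq, ?_, ?_⟩
  · rw [div_lt_one hsq]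
    linarith
  · rw [AffineMap.lineMap_apply_module', sub_add_eq_sub_sub_swap, inner_sub_right,
      real_inner_smul_right, div_mul_cancel₀ _ hsq.ne', sub_self]

theorem exists_conformal_model {A B C : E} (h : AffineIndependent ℝ ![A, B, C])
    (hA : ∠ B A C < Real.pi / 2) (hB : ∠ A B C < Real.pi / 2) :
    ∃ (g : ℂ →L[ℝ] E) (H : E) (a b : ℝ), IsConformalMap g ∧ 0 < a ∧ 0 < b ∧
      H + g ⟨-a, 0⟩ = A ∧ H + g ⟨b, 0⟩ = B ∧ H + g I = C := by
  obtain ⟨l, hl, hl1, horth⟩ := exists_altitude_foot hA hB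
  set H := AffineMap.lineMap A B l with hH
  have hCH : 0 < ‖C - H‖ := by
    refine norm_pos_iff.2 fun hC ↦ affineIndependent_iff_not_collinear_set.1 h ?_
    rw [pair_comm B C, insert_comm]
    exact collinear_insert_of_mem_affineSpan_pair
      (sub_eq_zero.1 hC ▸ AffineMap.lineMap_mem_affineSpan_pair l A B)
  have hBA : 0 < ‖B - A‖ :=
    norm_pos_iff.2 (sub_ne_zero.2 (h.injective.ne (by decide : (1 : Fin 3) ≠ 0)))
  set c := ‖C - H‖ / ‖B - A‖ with hc
  have hc0 : 0 < c := div_pos hCH hBA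
  have hnorm : ‖c • (B - A)‖ = ‖C - H‖ := by
    rw [norm_smul, Real.norm_of_nonneg hc0.le, hc, div_mul_cancel₀ _ hBA.ne']
  have hg (m : ℝ) : (reCLM.smulRight (c • (B - A)) + imCLM.smulRight (C - H)) ⟨m / c, 0⟩ =
      m • (B - A) := by
    simp [smul_smul, hc0.ne']
  refine ⟨reCLM.smulRight (c • (B - A)) + imCLM.smulRight (C - H), H, l / c, (1 - l) / c,
    isConformalMap_smulRight_add_smulRight (by rw [real_inner_smul_left, horth, mul_zero]) hnorm
      (norm_pos_iff.1 hCH), div_pos hl hc0, div_pos (sub_pos.2 hl1) hc0, ?_, ?_, by simp⟩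
  · rw [← neg_div, hg, hH, AffineMap.lineMap_apply_module']
    module
  · rw [hg, hH, AffineMap.lineMap_apply_module']
    module

theorem exists_isAcuteTriangulation_of_acute_base {A B C : E} (h : AffineIndependent ℝ ![A, B, C])
    (hA : ∠ B A C < Real.pi / 2) (hB : ∠ A B C < Real.pi / 2) :
    ∃ V : Fin 7 → Fin 3 → E, IsAcuteTriangulation V (convexHull ℝ {A, B, C}) := by
  obtain ⟨g, H, a, b, hg, ha, hb, rfl, rfl, rfl⟩ := exists_conformal_model h hA hB
  obtain ⟨V, hV⟩ := exists_isAcuteTriangulation_model ha hb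
  exact ⟨_, by simpa only [image_insert_eq, image_singleton] using hV.map hg H⟩

theorem stmt13_general (A B C : E) (h : AffineIndependent ℝ ![A, B, C]) :
    ∃ V : Fin 7 → Fin 3 → E, IsAcuteTriangulation V (convexHull ℝ {A, B, C}) := by
  have hAB : A ≠ B := h.injective.ne (by decide : (0 : Fin 3) ≠ 1)
  have hAC : A ≠ C := h.injective.ne (by decide : (0 : Fin 3) ≠ 2)
  have hBC : B ≠ C := h.injective.ne (by decide : (1 : Fin 3) ≠ 2)
  rcases lt_or_ge (∠ B A C) (Real.pi / 2) with hA | hA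
  · rcases lt_or_ge (∠ A B C) (Real.pi / 2) with hB | hB
    · exact exists_isAcuteTriangulation_of_acute_base h hA hB
    · rw [pair_comm B C]
      refine exists_isAcuteTriangulation_of_acute_base h.comm_right (by rwa [angle_comm]) ?_
      rw [angle_comm]
      exact angle_lt_pi_div_two_of_pi_div_two_le hBC (by rwa [angle_comm])
  · rw [insert_comm, pair_comm A C]
    refine exists_isAcuteTriangulation_of_acute_base h.comm_left.comm_right ?_ ?_ <;>
      rw [angle_comm]
    · exact angle_lt_pi_div_two_of_pi_div_two_le hAB hA
    · exact angle_lt_pi_div_two_of_pi_div_two_le hAC (by rwa [angle_comm])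

end Triangulation

/-- Every triangle in ℝ² admits an acute triangulation: finitely many triangles, pairwise
intersecting in a common face (a common vertex set's hull), whose union is the original
triangle, and all of whose angles are strictly less than `π/2`. -/
theorem stmt13 (A B C : EuclideanSpace ℝ (Fin 2))
    (h : AffineIndependent ℝ ![A, B, C]) :
    ∃ (N : ℕ) (V : Fin (N + 1) → Fin 3 → EuclideanSpace ℝ (Fin 2)),
      (∀ m, AffineIndependent ℝ (V m)) ∧
      (⋃ m, convexHull ℝ (Set.range (V m))) = convexHull ℝ {A, B, C} ∧
      (∀ m m', ∃ s s' : Set (Fin 3), V m '' s = V m' '' s' ∧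
        convexHull ℝ (Set.range (V m)) ∩ convexHull ℝ (Set.range (V m')) =
          convexHull ℝ (V m '' s)) ∧
      (∀ m, ∀ p q r : Fin 3, p ≠ q → q ≠ r → p ≠ r →
        EuclideanGeometry.angle (V m p) (V m q) (V m r) < Real.pi / 2) := by
  obtain ⟨V, hV⟩ := stmt13_general A B C h
  exact ⟨6, V, fun m ↦ (hV.acute m).affineIndependent, hV.iUnion_convexHull, hV.meetInFace,
    hV.acute⟩
end
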